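/- Let G be a finite directed acyclic graph whose underlying undirected graph is simple and planar. Then G has an upward planar drawing if and only if the underlying undirected graph of G has a visibility representation in which every edge is drawn as a vertical segment whose lower endpoint lies on the box of the tail of the edge and whose upper endpoint lies on the box of the head of the edge. -/

import Mathlib

open Set

/-- A point in the plane. -/
abbrev Pt : Type := ℝ × ℝ

/-- A point has integer coordinates. -/
def IsIntPt (p : Pt) : Prop := (∃ a : ℤ, p.1 = (a : ℝ)) ∧ (∃ b : ℤ, p.2 = (b : ℝ))

/-- The (closed) segments of a polygonal chain, as pairs of consecutive corners. -/
def chainSegs (l : List Pt) : List (Pt × Pt) := l.zip l.tail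

/-- The set of points covered by a polygonal chain. -/
def chainSet (l : List Pt) : Set Pt := ⋃ s ∈ chainSegs l, segment ℝ s.1 s.2

/-- A polygonal chain is simple (non-self-intersecting): it has at least two
corners, all corners are distinct, and two of its segments meet only if they are
consecutive, and then only in their shared corner. -/
def IsSimpleChain (l : List Pt) : Prop :=
  2 ≤ l.length ∧ l.Nodup ∧
    ∀ i j : ℕ, i < j → ∀ (hi : i < (chainSegs l).length) (hj : j < (chainSegs l).length),
      segment ℝ ((chainSegs l).get ⟨i, hi⟩).1 ((chainSegs l).get ⟨i, hi⟩).2 ∩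
        segment ℝ ((chainSegs l).get ⟨j, hj⟩).1 ((chainSegs l).get ⟨j, hj⟩).2 ⊆
        if j = i + 1 then {((chainSegs l).get ⟨j, hj⟩).1} else (∅ : Set Pt)

/-- Every interior corner of the chain is a genuine bend (a direction change). -/
def GenuineBends (l : List Pt) : Prop :=
  ∀ i : ℕ, ∀ h : i + 2 < l.length,
    ¬ Collinear ℝ ({l.get ⟨i, by omega⟩, l.get ⟨i + 1, by omega⟩, l.get ⟨i + 2, h⟩} : Set Pt)

/-- The chain is a y-monotone path (horizontal segments allowed). -/
def IsMonoChain (l : List Pt) : Prop :=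
  (l.map Prod.snd).Chain' (· ≤ ·) ∨ (l.map Prod.snd).Chain' (fun a b => b ≤ a)

/-- All segments of the chain are horizontal or vertical. -/
def IsOrthoChain (l : List Pt) : Prop :=
  ∀ s ∈ chainSegs l, s.1.1 = s.2.1 ∨ s.1.2 = s.2.2

/-- A poly-line drawing of a graph `G`: every vertex is a point, and every edge
`uv` is the polygonal chain through the list `bends u v` of bend points
(listed in order from `u` to `v`). -/
structure PolylineDrawing {V : Type*} (G : SimpleGraph V) where
  pos : V → Pt
  bends : V → V → List Pt
  bends_symm : ∀ u v, bends v u = (bends u v).reverse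

namespace PolylineDrawing

variable {V : Type*} {G : SimpleGraph V}

/-- The corner list of the curve of edge `uv`. -/
def chain (D : PolylineDrawing G) (u v : V) : List Pt :=
  D.pos u :: (D.bends u v ++ [D.pos v])

/-- The set of points of the curve of edge `uv`. -/
def curve (D : PolylineDrawing G) (u v : V) : Set Pt := chainSet (D.chain u v)

/-- The defining elements of the drawing: vertex points and bends. -/
def points (D : PolylineDrawing G) : Set Pt :=
  Set.range D.pos ∪ ⋃ (u) (v) (_ : G.Adj u v), {p | p ∈ D.bends u v}

/-- The drawing is planar: vertex points are pairwise distinct, every edge curve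
is a simple chain whose interior corners are genuine bends, an edge curve contains
no vertex point other than its endpoints, and two distinct edge curves intersect
only in points of common endpoints. -/
def IsPlanar (D : PolylineDrawing G) : Prop :=
  Function.Injective D.pos ∧
  (∀ u v, G.Adj u v → IsSimpleChain (D.chain u v) ∧ GenuineBends (D.chain u v)) ∧
  (∀ u v w, G.Adj u v → w ≠ u → w ≠ v → D.pos w ∉ D.curve u v) ∧
  (∀ u v x y, G.Adj u v → G.Adj x y → s(u, v) ≠ s(x, y) →
    D.curve u v ∩ D.curve x y ⊆ D.pos '' (({u, v} : Set V) ∩ ({x, y} : Set V)))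

/-- All defining elements have integer coordinates. -/
def IntCoords (D : PolylineDrawing G) : Prop := ∀ p ∈ D.points, IsIntPt p

/-- A straight-line drawing: no edge has bends. -/
def IsStraightLine (D : PolylineDrawing G) : Prop := ∀ u v : V, D.bends u v = []

/-- Every edge curve is a y-monotone path. -/
def IsYMonotone (D : PolylineDrawing G) : Prop :=
  ∀ u v, G.Adj u v → IsMonoChain (D.chain u v)

/-- The drawing fits (after translation) in the rows `1, …, h`. -/
def InHeight (D : PolylineDrawing G) (h : ℕ) : Prop :=
  ∃ y0 : ℤ, ∀ p ∈ D.points, (y0 : ℝ) ≤ p.2 ∧ p.2 ≤ (y0 : ℝ) + (h : ℝ) - 1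

/-- The drawing fits (after translation) in the columns `1, …, w`. -/
def InWidth (D : PolylineDrawing G) (w : ℕ) : Prop :=
  ∃ x0 : ℤ, ∀ p ∈ D.points, (x0 : ℝ) ≤ p.1 ∧ p.1 ≤ (x0 : ℝ) + (w : ℝ) - 1

end PolylineDrawing

/-- An axis-parallel box (possibly degenerated to a segment or a point). -/
structure Box where
  x1 : ℝ
  x2 : ℝ
  y1 : ℝ
  y2 : ℝ
  hx : x1 ≤ x2
  hy : y1 ≤ y2

/-- The set of points of a box. -/
def Box.pts (b : Box) : Set Pt := Set.Icc b.x1 b.x2 ×ˢ Set.Icc b.y1 b.y2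

/-- An orthogonal drawing of a graph `G`: every vertex is an axis-aligned box, and
every edge `uv` is an axis-parallel polygonal chain `chain u v` (its first corner is
the attachment point on the box of `u`, its last corner the attachment point on the
box of `v`). -/
structure OrthDrawing {V : Type*} (G : SimpleGraph V) where
  box : V → Box
  chain : V → V → List Pt
  chain_symm : ∀ u v, chain v u = (chain u v).reverse

namespace OrthDrawing

variable {V : Type*} {G : SimpleGraph V}

/-- The set of points of the curve of edge `uv`. -/
def curve (D : OrthDrawing G) (u v : V) : Set Pt := chainSet (D.chain u v)

/-- The defining elements of the drawing: corners of vertex boxes, and corners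
(attachment points and bends) of edge chains. -/
def points (D : OrthDrawing G) : Set Pt :=
  (⋃ v, ({((D.box v).x1, (D.box v).y1), ((D.box v).x1, (D.box v).y2),
          ((D.box v).x2, (D.box v).y1), ((D.box v).x2, (D.box v).y2)} : Set Pt)) ∪
    ⋃ (u) (v) (_ : G.Adj u v), {p | p ∈ D.chain u v}

/-- All points covered by the drawing (boxes and edge curves). -/
def region (D : OrthDrawing G) : Set Pt :=
  (⋃ v, (D.box v).pts) ∪ ⋃ (u) (v) (_ : G.Adj u v), D.curve u v

/-- The drawing is planar: vertex boxes are pairwise disjoint; every edge curve is a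
simple axis-parallel chain, with genuine bends, joining the boxes of its endpoints;
an edge curve meets a vertex box only in its attachment points; and two distinct
edge curves intersect only in common endpoints. -/
def IsPlanar (D : OrthDrawing G) : Prop :=
  (∀ u v : V, u ≠ v → Disjoint (D.box u).pts (D.box v).pts) ∧
  (∀ u v, G.Adj u v → IsSimpleChain (D.chain u v) ∧ IsOrthoChain (D.chain u v) ∧
      GenuineBends (D.chain u v)) ∧
  (∀ u v, G.Adj u v → ∃ p q l, D.chain u v = p :: (l ++ [q]) ∧
      p ∈ (D.box u).pts ∧ q ∈ (D.box v).pts) ∧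
  (∀ u v w, G.Adj u v → D.curve u v ∩ (D.box w).pts ⊆
      {p | (w = u ∧ (D.chain u v).head? = some p) ∨
           (w = v ∧ (D.chain u v).getLast? = some p)}) ∧
  (∀ u v x y, G.Adj u v → G.Adj x y → s(u, v) ≠ s(x, y) →
      D.curve u v ∩ D.curve x y ⊆
        {p | ((D.chain u v).head? = some p ∨ (D.chain u v).getLast? = some p) ∧
             ((D.chain x y).head? = some p ∨ (D.chain x y).getLast? = some p)})

/-- A flat drawing: every vertex box is degenerated to a horizontal segment. -/
def IsFlat (D : OrthDrawing G) : Prop := ∀ v, (D.box v).y1 = (D.box v).y2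

/-- A visibility representation: an orthogonal drawing without bends, i.e. every
edge is a single horizontal or vertical segment. -/
def IsVR (D : OrthDrawing G) : Prop := ∀ u v, G.Adj u v → (D.chain u v).length = 2

/-- Every edge curve is a y-monotone path. -/
def IsYMonotone (D : OrthDrawing G) : Prop := ∀ u v, G.Adj u v → IsMonoChain (D.chain u v)

/-- All defining elements have integer coordinates. -/
def IntCoords (D : OrthDrawing G) : Prop := ∀ p ∈ D.points, IsIntPt p

/-- The drawing fits (after translation) in the rows `1, …, h`. -/
def InHeight (D : OrthDrawing G) (h : ℕ) : Prop :=
  ∃ y0 : ℤ, ∀ p ∈ D.points, (y0 : ℝ) ≤ p.2 ∧ p.2 ≤ (y0 : ℝ) + (h : ℝ) - 1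

/-- The drawing fits (after translation) in the columns `1, …, w`. -/
def InWidth (D : OrthDrawing G) (w : ℕ) : Prop :=
  ∃ x0 : ℤ, ∀ p ∈ D.points, (x0 : ℝ) ≤ p.1 ∧ p.1 ≤ (x0 : ℝ) + (w : ℝ) - 1

end OrthDrawing

/-- `G` is planar: it admits a (real-coordinate) planar straight-line drawing
(by Fáry's theorem this is equivalent to planarity for finite simple graphs). -/
def HasPlanarEmbedding {V : Type*} (G : SimpleGraph V) : Prop :=
  ∃ pos : V → Pt, Function.Injective pos ∧
    (∀ u v w, G.Adj u v → w ≠ u → w ≠ v → pos w ∉ segment ℝ (pos u) (pos v)) ∧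
    ∀ u v x y, G.Adj u v → G.Adj x y → s(u, v) ≠ s(x, y) →
      segment ℝ (pos u) (pos v) ∩ segment ℝ (pos x) (pos y) ⊆
        pos '' (({u, v} : Set V) ∩ ({x, y} : Set V))

/-!
From a drawing to bars: in an upward planar straight-line drawing, "runs to the left of at some
common height" extends to a linear order on the edges and vertices.  It serves as an order of
columns: an edge becomes a vertical segment in its column, and the bar of a vertex, at the height
of that vertex, spans the columns of the incident edges.

From bars to a drawing: put a floor below and a ceiling above the bars, keep the heights and look
for abscissas such that all pairs of mutually visible bars, and hence all edges, can be joined by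
straight segments.  It suffices that each such segment passes every vertex on the same side as the
line of sight passes the bar.  Placing all vertices on one vertical line satisfies these
constraints except that vertices touch segments.  With conductances that make every affine function
of the height harmonic, all touching vertices are in equilibrium.  As long as some line contains a
contact, apply a horizontal unit load at an outermost vertex of that line, pushing it to its proper
side.  By a discrete maximum principle the resulting displacement violates no constraint, and a
small multiple of it removes a contact while creating none.  In the end the constraints hold
strictly.  They are open and homogeneous in the abscissas, so an integral solution exists.
-/

/-! ### Upward embeddings -/

section Chains

theorem chainSet_pair (p q : Pt) : chainSet [p, q] = segment ℝ p q := by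
  simp [chainSet, chainSegs]

theorem isSimpleChain_pair {p q : Pt} (h : p ≠ q) : IsSimpleChain [p, q] := by
  refine ⟨le_rfl, by simpa using h, fun i j hij _ hj => ?_⟩
  simp only [chainSegs, List.tail_cons, List.zip_cons_cons, List.zip_nil_right,
    List.length_cons, List.length_nil] at hj
  omega

theorem genuineBends_pair (p q : Pt) : GenuineBends [p, q] := fun _ h => by
  simp only [List.length_cons, List.length_nil] at h
  omega

theorem mem_vertical_segment {x c d : ℝ} {P : Pt} :
    P ∈ segment ℝ ((x, c) : Pt) (x, d) ↔ P.1 = x ∧ P.2 ∈ uIcc c d := by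
  rw [← Prod.image_mk_segment_right, segment_eq_uIcc]
  constructor
  · rintro ⟨y, hy, rfl⟩
    exact ⟨rfl, hy⟩
  · rintro ⟨rfl, hy⟩
    exact ⟨P.2, hy, rfl⟩

end Chains

section Lines

/-- The first coordinate, at height `y`, of the line through `p` and `q`.  Division by zero makes
`lineX p p` the constant `p.1`, so that a point is its own degenerate line. -/
noncomputable def lineX (p q : Pt) (y : ℝ) : ℝ := p.1 + (q.1 - p.1) / (q.2 - p.2) * (y - p.2)

variable {p q p' q' : Pt}

theorem lineX_lower (p q : Pt) : lineX p q p.2 = p.1 := by simp [lineX]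

theorem lineX_upper (h : p.2 < q.2) : lineX p q q.2 = q.1 := by
  have : q.2 - p.2 ≠ 0 := by linarith
  unfold lineX
  field_simp
  ring

theorem continuous_lineX (p q : Pt) : Continuous (lineX p q) := by
  unfold lineX
  fun_prop

theorem exists_lineX_sub_lineX_eq (p q p' q' : Pt) :
    ∃ m c, ∀ y, lineX p' q' y - lineX p q y = m * y + c :=
  ⟨(q'.1 - p'.1) / (q'.2 - p'.2) - (q.1 - p.1) / (q.2 - p.2),
    p'.1 - p.1 - (q'.1 - p'.1) / (q'.2 - p'.2) * p'.2 + (q.1 - p.1) / (q.2 - p.2) * p.2,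
    fun y => by unfold lineX; ring⟩

theorem exists_mem_uIoo_lineX_eq {s t : ℝ} (hs : lineX p q s < lineX p' q' s)
    (ht : lineX p' q' t < lineX p q t) : ∃ y ∈ uIoo s t, lineX p q y = lineX p' q' y := by
  let g : ℝ → ℝ := fun y => lineX p q y - lineX p' q' y
  have hg : Continuous g := (continuous_lineX p q).sub (continuous_lineX p' q')
  have hgs : g s < 0 := sub_neg.2 hs
  have hgt : 0 < g t := sub_pos.2 ht
  obtain ⟨y, hy, hgy⟩ := intermediate_value_uIcc hg.continuousOn
    (mem_uIcc_of_le hgs.le hgt.le : (0 : ℝ) ∈ uIcc (g s) (g t))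
  have hys : y ≠ s := by rintro rfl; exact hgs.ne hgy
  have hyt : y ≠ t := by rintro rfl; exact hgt.ne' hgy
  refine ⟨y, ⟨inf_lt_iff.2 ?_, lt_sup_iff.2 ?_⟩, sub_eq_zero.1 hgy⟩
  · exact (inf_le_iff.1 hy.1).imp (lt_of_le_of_ne · hys.symm) (lt_of_le_of_ne · hyt.symm)
  · exact (le_sup_iff.1 hy.2).imp (lt_of_le_of_ne · hys) (lt_of_le_of_ne · hyt)

theorem mem_segment_iff_lineX (h : p.2 < q.2) {P : Pt} :
    P ∈ segment ℝ p q ↔ P.2 ∈ Icc p.2 q.2 ∧ P.1 = lineX p q P.2 := by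
  have hne : q.2 - p.2 ≠ 0 := by linarith
  rw [segment_eq_image']
  constructor
  · rintro ⟨t, ⟨ht₀, ht₁⟩, rfl⟩
    simp only [Prod.fst_add, Prod.snd_add, Prod.smul_fst, Prod.smul_snd, Prod.fst_sub,
      Prod.snd_sub, smul_eq_mul, lineX]
    refine ⟨⟨by nlinarith, by nlinarith⟩, ?_⟩
    field_simp
    ring
  · rintro ⟨⟨h₁, h₂⟩, hP⟩
    refine ⟨(P.2 - p.2) / (q.2 - p.2), ⟨div_nonneg (by linarith) (by linarith), ?_⟩, ?_⟩
    · exact (div_le_one (by linarith)).2 (by linarith)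
    · refine Prod.ext ?_ ?_ <;>
        simp only [Prod.fst_add, Prod.snd_add, Prod.smul_fst, Prod.smul_snd, Prod.fst_sub,
          Prod.snd_sub, smul_eq_mul]
      · rw [hP, lineX]
        ring
      · field_simp
        ring

end Lines

theorem exists_rank {ι α : Type*} [Finite ι] [LinearOrder α] (f : ι → α) :
    ∃ Y : ι → ℕ, Function.Injective Y ∧ ∀ v w, f v < f w → Y v < Y w := by
  cases nonempty_fintype ι
  let key : ι → α ×ₗ Fin (Fintype.card ι) := fun v => toLex (f v, Fintype.equivFin ι v)
  have key_injective : Function.Injective key := fun v w h =>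
    (Fintype.equivFin ι).injective (congrArg (fun z => (ofLex z).2) h)
  let := LinearOrder.lift' key key_injective
  let e := Fintype.orderIsoFinOfCardEq ι rfl
  refine ⟨fun v => (e.symm v : ℕ), Fin.val_injective.comp e.symm.injective, fun v w h => ?_⟩
  have hlt : key v < key w := Prod.Lex.toLex_lt_toLex.2 (Or.inl h)
  exact e.symm.lt_iff_lt.2 hlt

section Upward

variable {V : Type*} {A : V → V → Prop} {G : SimpleGraph V}

/-- `pos` places the vertices of the digraph `A` so that its straight-line drawing is planar and
upward.  Edges are oriented, so each undirected edge is looked at in one direction only. -/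
structure IsUpwardEmbedding (A : V → V → Prop) (pos : V → Pt) : Prop where
  injective : Function.Injective pos
  lt_snd : ∀ {u v}, A u v → (pos u).2 < (pos v).2
  notMem_segment : ∀ {u v w}, A u v → w ≠ u → w ≠ v → pos w ∉ segment ℝ (pos u) (pos v)
  inter_subset : ∀ {u v x y}, A u v → A x y → ¬(u = x ∧ v = y) →
    segment ℝ (pos u) (pos v) ∩ segment ℝ (pos x) (pos y) ⊆ pos '' ({u, v} ∩ {x, y})

theorem IsUpwardEmbedding.comap {W : Type*} {B : W → W → Prop} {pos : W → Pt}
    (h : IsUpwardEmbedding B pos) {f : V → W} (hf : Function.Injective f)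
    (hAB : ∀ {u v}, A u v → B (f u) (f v)) : IsUpwardEmbedding A (pos ∘ f) where
  injective := h.injective.comp hf
  lt_snd huv := h.lt_snd (hAB huv)
  notMem_segment huv hu hv := h.notMem_segment (hAB huv) (hf.ne hu) (hf.ne hv)
  inter_subset huv hxy hne := (h.inter_subset (hAB huv) (hAB hxy)
    fun e => hne ⟨hf e.1, hf e.2⟩).trans <| by
      rintro _ ⟨w, hw, rfl⟩
      rw [← image_pair, ← image_pair, ← image_inter hf] at hw
      obtain ⟨z, hz, rfl⟩ := hw
      exact ⟨z, hz, rfl⟩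

theorem PolylineDrawing.IsStraightLine.curve_eq {D : PolylineDrawing G} (h : D.IsStraightLine)
    (u v : V) : D.curve u v = segment ℝ (D.pos u) (D.pos v) := by
  rw [curve, chain, h u v]
  exact chainSet_pair _ _

/-- The straight-line drawing with prescribed vertex points. -/
def straightLineDrawing (G : SimpleGraph V) (pos : V → Pt) : PolylineDrawing G where
  pos := pos
  bends _ _ := []
  bends_symm _ _ := rfl

theorem isUpwardEmbedding_of_isPlanar {D : PolylineDrawing G} (hAG : ∀ u v, A u v → G.Adj u v)
    (hS : D.IsStraightLine) (hD : D.IsPlanar) (hup : ∀ u v, A u v → (D.pos u).2 < (D.pos v).2) :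
    IsUpwardEmbedding A D.pos where
  injective := hD.1
  lt_snd := hup _ _
  notMem_segment huv hu hv := hS.curve_eq _ _ ▸ hD.2.2.1 _ _ _ (hAG _ _ huv) hu hv
  inter_subset {u v x y} huv hxy hne := by
    rw [← hS.curve_eq, ← hS.curve_eq]
    refine hD.2.2.2 u v x y (hAG _ _ huv) (hAG _ _ hxy) fun h => ?_
    obtain h | ⟨rfl, rfl⟩ := Sym2.eq_iff.1 h
    · exact hne h
    · exact lt_asymm (hup _ _ huv) (hup _ _ hxy)

theorem IsUpwardEmbedding.isPlanar_straightLineDrawing {pos : V → Pt}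
    (h : IsUpwardEmbedding A pos) (hAG : ∀ u v, G.Adj u v → A u v ∨ A v u) :
    (straightLineDrawing G pos).IsPlanar := by
  have hcurve : ∀ u v, (straightLineDrawing G pos).curve u v = segment ℝ (pos u) (pos v) :=
    PolylineDrawing.IsStraightLine.curve_eq fun _ _ => rfl
  refine ⟨h.injective, fun u v huv => ⟨isSimpleChain_pair (h.injective.ne huv.ne),
    genuineBends_pair _ _⟩, fun u v w huv hu hv => ?_, fun u v x y huv hxy hne => ?_⟩
  · rw [hcurve]
    obtain huv | hvu := hAG u v huv
    · exact h.notMem_segment huv hu hv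
    · exact segment_symm ℝ (pos u) (pos v) ▸ h.notMem_segment hvu hv hu
  · rw [hcurve, hcurve]
    wlog huv' : A u v generalizing u v
    · rw [segment_symm, pair_comm u]
      exact this v u huv.symm (Sym2.eq_swap ▸ hne) ((hAG u v huv).resolve_left huv')
    wlog hxy' : A x y generalizing x y
    · rw [segment_symm ℝ (pos x), pair_comm x]
      exact this y x hxy.symm (by rwa [Sym2.eq_swap (a := y)]) ((hAG x y hxy).resolve_left hxy')
    exact h.inter_subset huv' hxy' fun e => hne (Sym2.eq_iff.2 (Or.inl e))

theorem exists_upward_drawing_iff (hAG : ∀ u v, G.Adj u v ↔ (A u v ∨ A v u)) :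
    (∃ D : PolylineDrawing G, D.IsStraightLine ∧ D.IsPlanar ∧ D.IntCoords ∧
      ∀ u v, A u v → (D.pos u).2 < (D.pos v).2) ↔
    ∃ pos : V → Pt, IsUpwardEmbedding A pos ∧ ∀ v, IsIntPt (pos v) := by
  constructor
  · rintro ⟨D, hS, hD, hI, hup⟩
    exact ⟨D.pos, isUpwardEmbedding_of_isPlanar (fun u v h => (hAG u v).2 (Or.inl h)) hS hD hup,
      fun v => hI _ (Or.inl ⟨v, rfl⟩)⟩
  · rintro ⟨pos, hpos, hI⟩
    refine ⟨straightLineDrawing G pos, fun _ _ => rfl,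
      hpos.isPlanar_straightLineDrawing fun u v => (hAG u v).1, ?_, fun _ _ => hpos.lt_snd⟩
    rintro P (⟨v, rfl⟩ | hP)
    · exact hI v
    · simp [straightLineDrawing] at hP

end Upward

/-! ### Bars and lines of sight -/

theorem affine_le_of_between {m k M y₀ y y₁ : ℝ} (h₀ : m * y₀ + k = M)
    (hy : 0 < (y - y₀) * (y₁ - y₀)) (h : m * y + k ≤ M) :
    m * y₁ + k ≤ M ∧ (m * y₁ + k = M → m * y + k = M) := by
  have hproportional : (m * y₁ + k - M) * (y - y₀) = (m * y + k - M) * (y₁ - y₀) := by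
    rw [← h₀]
    ring
  constructor
  · have : (m * y₁ + k - M) * ((y - y₀) * (y₁ - y₀)) ≤ 0 := by
      rw [← mul_assoc, hproportional, mul_assoc]
      exact mul_nonpos_of_nonpos_of_nonneg (by linarith) (mul_self_nonneg _)
    linarith [nonpos_of_mul_nonpos_left this hy]
  · intro h₁
    rw [h₁, sub_self, zero_mul, eq_comm, mul_eq_zero] at hproportional
    linarith [hproportional.resolve_right (right_ne_zero_of_mul hy.ne')]

/-- Horizontal bars at pairwise distinct heights. -/
structure BarSystem (W : Type*) where
  height : W → ℝ
  left : W → ℝ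
  right : W → ℝ
  left_le_right : ∀ v, left v ≤ right v
  height_injective : Function.Injective height

namespace BarSystem

variable {W : Type*} (B : BarSystem W) {S : Set W} {x : W → ℝ} {a b v w : W} {t M : ℝ}

/-- The horizontal extent of the bar of `v`. -/
def span (v : W) : Set ℝ := Icc (B.left v) (B.right v)

/-- The vertical line at abscissa `t` leaves the bar of `a` upwards and hits the bar of `b` before
any other bar. -/
structure SeesAt (t : ℝ) (a b : W) : Prop where
  height_lt : B.height a < B.height b
  mem_lower : t ∈ B.span a
  mem_upper : t ∈ B.span b
  notMem_span : ∀ v, B.height a < B.height v → B.height v < B.height b → t ∉ B.span v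

/-- The bar of `b` is vertically visible from the bar of `a` below it. -/
def Sees (a b : W) : Prop := ∃ t, B.SeesAt t a b

/-- A chosen abscissa at which `b` is visible from `a`; meaningless if there is none. -/
noncomputable def sight (a b : W) : ℝ := Classical.epsilon fun t => B.SeesAt t a b

/-- Mutual visibility. -/
def Adj (v w : W) : Prop := B.Sees v w ∨ B.Sees w v

/-- Inside the set `S` of bars, the line of sight from `a` up to `b` passes the height of `v`. -/
structure Passes (S : Set W) (a b v : W) : Prop where
  sees : B.Sees a b
  lower_lt : B.height a < B.height v
  lt_upper : B.height v < B.height b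
  lower_mem : a ∈ S
  upper_mem : b ∈ S
  mem : v ∈ S

/-- The side of the bar of `v`, `1` for right and `-1` for left, on which the line of sight from
`a` to `b` passes it. -/
noncomputable def side (v a b : W) : ℝ := Real.sign (B.sight a b - B.left v)

/-- The abscissa, at a given height, of the line joining `a` and `b` when every vertex `v` is
placed at `(x v, B.height v)`. -/
noncomputable def line (x : W → ℝ) (a b : W) : ℝ → ℝ :=
  lineX (x a, B.height a) (x b, B.height b)

/-- The horizontal displacement of `w` from the line joining `a` and `b`. -/
noncomputable def deviation (x : W → ℝ) (a b w : W) : ℝ := x w - B.line x a b (B.height w)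

/-- The signed distance by which the line joining `a` and `b` stays on the side of `v` prescribed
by the bars. -/
noncomputable def gap (x : W → ℝ) (v a b : W) : ℝ :=
  B.side v a b * (B.line x a b (B.height v) - x v)

variable {B}

theorem Sees.seesAt (h : B.Sees a b) : B.SeesAt (B.sight a b) a b := Classical.epsilon_spec h

theorem Sees.height_lt (h : B.Sees a b) : B.height a < B.height b := h.seesAt.height_lt

theorem Passes.notMem_span (h : B.Passes S a b v) : B.sight a b ∉ B.span v :=
  h.sees.seesAt.notMem_span v h.lower_lt h.lt_upper

theorem Passes.side_cases (h : B.Passes S a b v) :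
    (B.side v a b = 1 ∧ B.right v < B.sight a b) ∨
      (B.side v a b = -1 ∧ B.sight a b < B.left v) := by
  have hlr := B.left_le_right v
  obtain hlt | hle := lt_or_ge (B.sight a b) (B.left v)
  · exact Or.inr ⟨Real.sign_of_neg (sub_neg.2 hlt), hlt⟩
  · have hr : B.right v < B.sight a b := lt_of_not_ge fun hr => h.notMem_span ⟨hle, hr⟩
    exact Or.inl ⟨Real.sign_of_pos (by linarith), hr⟩

theorem Passes.side_eq_sign (h : B.Passes S a b v) (ht : t ∈ B.span v) :
    B.side v a b = Real.sign (B.sight a b - t) := by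
  obtain ⟨hs, hr⟩ | ⟨hs, hl⟩ := h.side_cases
  · rw [hs, Real.sign_of_pos (by linarith [ht.2])]
  · rw [hs, Real.sign_of_neg (by linarith [ht.1])]

theorem Passes.side_ne_zero (h : B.Passes S a b v) : B.side v a b ≠ 0 := by
  obtain ⟨hs, -⟩ | ⟨hs, -⟩ := h.side_cases <;> norm_num [hs]

theorem Passes.adj_cases (h : B.Passes S a b v) (hvw : B.Adj v w) (hw : w ∈ S) (hwa : w ≠ a)
    (hwb : w ≠ b) :
    (B.Passes S a b w ∧ B.side w a b = B.side v a b) ∨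
      ∃ c d e, (c = a ∨ c = b) ∧ (d = v ∧ e = w ∨ d = w ∧ e = v) ∧ B.Passes S d e c ∧
        B.side c d e = -B.side v a b := by
  have hab := h.sees.seesAt
  obtain hs | hs := hvw
  · have hvw := hs.seesAt
    obtain hlt | hle := lt_or_ge (B.height w) (B.height b)
    · have hpass : B.Passes S a b w :=
        ⟨h.sees, h.lower_lt.trans hs.height_lt, hlt, h.lower_mem, h.upper_mem, hw⟩
      exact Or.inl ⟨hpass, by rw [hpass.side_eq_sign hvw.mem_upper, h.side_eq_sign hvw.mem_lower]⟩
    · have hpass : B.Passes S v w b := ⟨hs, h.lt_upper,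
        hle.lt_of_ne (B.height_injective.ne hwb).symm, h.mem, hw, h.upper_mem⟩
      refine Or.inr ⟨b, v, w, Or.inr rfl, Or.inl ⟨rfl, rfl⟩, hpass, ?_⟩
      rw [hpass.side_eq_sign hab.mem_upper, h.side_eq_sign hvw.mem_lower, ← Real.sign_neg, neg_sub]
  · have hwv := hs.seesAt
    obtain hlt | hle := lt_or_ge (B.height a) (B.height w)
    · have hpass : B.Passes S a b w :=
        ⟨h.sees, hlt, hs.height_lt.trans h.lt_upper, h.lower_mem, h.upper_mem, hw⟩
      exact Or.inl ⟨hpass, by rw [hpass.side_eq_sign hwv.mem_lower, h.side_eq_sign hwv.mem_upper]⟩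
    · have hpass : B.Passes S w v a := ⟨hs, hle.lt_of_ne (B.height_injective.ne hwa),
        h.lower_lt, hw, h.mem, h.lower_mem⟩
      refine Or.inr ⟨a, w, v, Or.inl rfl, Or.inr ⟨rfl, rfl⟩, hpass, ?_⟩
      rw [hpass.side_eq_sign hab.mem_lower, h.side_eq_sign hwv.mem_upper, ← Real.sign_neg, neg_sub]

theorem line_lower : B.line x a b (B.height a) = x a := lineX_lower (x a, _) _

theorem line_upper (h : B.height a < B.height b) : B.line x a b (B.height b) = x b :=
  lineX_upper (p := (x a, _)) (q := (x b, _)) h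

theorem Passes.deviation_le {c d e : W} {σ : ℝ} (h : B.Passes S d e c)
    (hde : d = v ∧ e = w ∨ d = w ∧ e = v)
    (hv : σ * B.deviation x a b v = M)
    (hc : σ * (B.line x d e (B.height c) - B.line x a b (B.height c)) ≤ M) :
    σ * B.deviation x a b w ≤ M ∧
      (σ * B.deviation x a b w = M →
        σ * (B.line x d e (B.height c) - B.line x a b (B.height c)) = M) := by
  unfold deviation at *
  obtain ⟨hline_v, hline_w⟩ :
      B.line x d e (B.height v) = x v ∧ B.line x d e (B.height w) = x w := by
    obtain ⟨rfl, rfl⟩ | ⟨rfl, rfl⟩ := hde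
    exacts [⟨line_lower, line_upper h.sees.height_lt⟩, ⟨line_upper h.sees.height_lt, line_lower⟩]
  have hbetween : 0 < (B.height c - B.height v) * (B.height w - B.height v) := by
    obtain ⟨rfl, rfl⟩ | ⟨rfl, rfl⟩ := hde
    · exact mul_pos (sub_pos.2 h.lower_lt) (sub_pos.2 h.sees.height_lt)
    · exact mul_pos_of_neg_of_neg (sub_neg.2 h.lt_upper) (sub_neg.2 h.sees.height_lt)
  obtain ⟨m, k, hmk⟩ : ∃ m k, ∀ y, σ * (B.line x d e y - B.line x a b y) = m * y + k := by
    obtain ⟨m, k, hmk⟩ := exists_lineX_sub_lineX_eq (x a, B.height a) (x b, B.height b)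
      (x d, B.height d) (x e, B.height e)
    exact ⟨σ * m, σ * k, fun y => by rw [line, line, hmk]; ring⟩
  rw [← hline_v, hmk] at hv
  rw [← hline_w, hmk]
  rw [hmk] at hc ⊢
  exact affine_le_of_between hv hbetween hc

theorem deviation_le_of_gap_eq (hM : ∀ {a b v}, B.Passes S a b v → -M ≤ B.gap x v a b)
    (hM₀ : 0 ≤ M) (h : B.Passes S a b v) (hgap : B.gap x v a b = -M) (hvw : B.Adj v w)
    (hw : w ∈ S) :
    B.side v a b * B.deviation x a b w ≤ M ∧
      (B.side v a b * B.deviation x a b w = M → M ≠ 0 →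
        ∃ c d e, B.Passes S d e c ∧ B.gap x c d e = -M ∧
          (B.height w < B.height v → B.height c < B.height v)) := by
  unfold gap at hM hgap
  unfold deviation
  have hline_ab : ∀ c, c = a ∨ c = b → B.line x a b (B.height c) = x c := by
    rintro c (rfl | rfl)
    exacts [line_lower, line_upper h.sees.height_lt]
  by_cases hend : w = a ∨ w = b
  · rw [hline_ab w hend, sub_self, mul_zero]
    exact ⟨hM₀, fun h₀ h₁ => absurd h₀.symm h₁⟩
  obtain ⟨hpass, hside⟩ | ⟨c, d, e, hc, hde, hpass, hside⟩ :=
    h.adj_cases hvw hw (fun e => hend (Or.inl e)) fun e => hend (Or.inr e)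
  · have := hM hpass
    rw [hside] at this
    exact ⟨by linarith, fun heq _ => ⟨w, a, b, hpass, by rw [gap, hside]; linarith, id⟩⟩
  · have hcM := hM hpass
    rw [hside] at hcM
    obtain ⟨hle, heq⟩ := hpass.deviation_le (M := M) hde (by rw [deviation]; linarith)
      (by rw [hline_ab c hc]; linarith : B.side v a b * _ ≤ M)
    refine ⟨hle, fun h₁ _ => ⟨c, d, e, hpass, ?_, fun hlt => ?_⟩⟩
    · rw [gap, hside, ← hline_ab c hc]
      linarith [heq h₁]
    · obtain ⟨rfl, rfl⟩ | ⟨rfl, rfl⟩ := hde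
      exacts [absurd hpass.sees.height_lt hlt.asymm, hpass.lt_upper]

end BarSystem

/-! ### Harmonic functions on the visibility graph -/

theorem exists_lex_min {ι α β : Type*} [Finite ι] [LinearOrder α] [LinearOrder β] {T : Set ι}
    (hT : T.Nonempty) (f : ι → α) (g : ι → β) :
    ∃ i ∈ T, (∀ j ∈ T, f i ≤ f j) ∧ ∀ j ∈ T, f j = f i → g i ≤ g j := by
  obtain ⟨i, hi, hmin⟩ := exists_min_image T (fun i => toLex (f i, g i)) T.toFinite hT
  refine ⟨i, hi, fun j hj => ?_, fun j hj h => ?_⟩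
  · obtain h | h := Prod.Lex.toLex_le_toLex.1 (hmin j hj)
    exacts [h.le, h.1.le]
  · obtain h' | h' := Prod.Lex.toLex_le_toLex.1 (hmin j hj)
    exacts [absurd h h'.ne', h'.2]

namespace BarSystem

variable {W : Type*} (B : BarSystem W) {S : Set W} {x : W → ℝ} {a b v w : W}

/-- Some bar is visible below the bar of `v`, and some bar is visible above it. -/
def Supported (v : W) : Prop := (∃ w, B.Sees w v) ∧ ∃ w, B.Sees v w

variable [Fintype W]

open Classical in
/-- Conductance of the pair `v`, `w`, as felt by `v`.  Each upper neighbour of `v` is weighted by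
the total height drop to the lower neighbours and conversely, which makes the height function, and
hence every affine function of it, harmonic. -/
noncomputable def weight (v w : W) : ℝ :=
  (if B.Sees v w then ∑ u with B.Sees u v, (B.height v - B.height u) else 0) +
    if B.Sees w v then ∑ u with B.Sees v u, (B.height u - B.height v) else 0

/-- The weighted Laplacian: the total pull of the neighbours of `v` on `v`. -/
noncomputable def load : (W → ℝ) →ₗ[ℝ] W → ℝ :=
  LinearMap.pi fun v => ∑ w, B.weight v w • (.proj w - .proj v : (W → ℝ) →ₗ[ℝ] ℝ)

variable {B}

theorem load_apply (x : W → ℝ) (v : W) : B.load x v = ∑ w, B.weight v w * (x w - x v) := by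
  simp [load]

theorem weight_nonneg (v w : W) : 0 ≤ B.weight v w := by
  classical
  refine add_nonneg ?_ ?_ <;> split_ifs <;>
    first
    | exact le_rfl
    | exact Finset.sum_nonneg fun u hu => sub_nonneg.2 (Finset.mem_filter.1 hu).2.height_lt.le

theorem weight_eq_zero (h : ¬B.Adj v w) : B.weight v w = 0 := by
  rw [Adj, not_or] at h
  simp [weight, h.1, h.2]

theorem Supported.weight_pos (hv : B.Supported v) (h : B.Adj v w) : 0 < B.weight v w := by
  classical
  obtain ⟨⟨u₁, h₁⟩, u₂, h₂⟩ := hv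
  obtain h | h := h
  · rw [weight, if_pos h, if_neg fun h' => lt_asymm h.height_lt h'.height_lt, add_zero]
    exact Finset.sum_pos (fun u hu => sub_pos.2 (Finset.mem_filter.1 hu).2.height_lt)
      ⟨u₁, by simpa using h₁⟩
  · rw [weight, if_neg fun h' => lt_asymm h.height_lt h'.height_lt, if_pos h, zero_add]
    exact Finset.sum_pos (fun u hu => sub_pos.2 (Finset.mem_filter.1 hu).2.height_lt)
      ⟨u₂, by simpa using h₂⟩

theorem load_height (v : W) : B.load B.height v = 0 := by
  classical
  simp only [load_apply, weight, add_mul, ite_mul, zero_mul, Finset.sum_add_distrib,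
    ← Finset.sum_filter, ← Finset.mul_sum]
  rw [mul_comm, ← mul_add, ← Finset.sum_add_distrib]
  simp

theorem load_eq_sum_deviation (x : W → ℝ) (v a b : W) :
    B.load x v = ∑ w, B.weight v w * (B.deviation x a b w - B.deviation x a b v) := by
  have h := load_height (B := B) v
  rw [load_apply] at h ⊢
  rw [← sub_eq_zero, ← Finset.sum_sub_distrib,
    ← mul_zero ((x b - x a) / (B.height b - B.height a)), ← h, Finset.mul_sum]
  refine Finset.sum_congr rfl fun w _ => ?_
  simp only [deviation, line, lineX]
  ring

theorem Supported.eq_zero_of_sum_nonneg (hv : B.Supported v) {f : W → ℝ}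
    (hf : ∀ w, B.Adj v w → f w ≤ 0) (hsum : 0 ≤ ∑ w, B.weight v w * f w) :
    (∑ w, B.weight v w * f w = 0) ∧ ∀ w, B.Adj v w → f w = 0 := by
  have hterm : ∀ w ∈ Finset.univ, B.weight v w * f w ≤ 0 := fun w _ => by
    by_cases h : B.Adj v w
    · exact mul_nonpos_of_nonneg_of_nonpos (weight_nonneg v w) (hf w h)
    · rw [weight_eq_zero h, zero_mul]
  have hzero := le_antisymm (Finset.sum_nonpos hterm) hsum
  exact ⟨hzero, fun w hw => (mul_eq_zero.1 ((Finset.sum_eq_zero_iff_of_nonpos hterm).1 hzero w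
    (Finset.mem_univ w))).resolve_left (hv.weight_pos hw).ne'⟩

theorem nonpos_of_load_eq_zero {I : Set W} (hI : ∀ v ∈ I, B.Supported v)
    (hload : ∀ v ∈ I, B.load x v = 0) (hx : ∀ v ∉ I, x v = 0) (v : W) : x v ≤ 0 := by
  obtain ⟨u, -, hmax, hlow⟩ := exists_lex_min (T := univ) ⟨v, trivial⟩ (fun w => -x w) B.height
  refine (neg_le_neg_iff.1 (hmax v trivial)).trans ?_
  by_contra hpos
  have hu : u ∈ I := by_contra fun h => hpos (hx u h).le
  obtain ⟨-, hnbr⟩ := (hI u hu).eq_zero_of_sum_nonneg (f := fun w => x w - x u)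
    (fun w _ => by linarith [hmax w trivial]) (by rw [← load_apply, hload u hu])
  obtain ⟨w, hw⟩ := (hI u hu).1
  have := hlow w trivial (by linarith [hnbr w (Or.inr hw)])
  exact this.not_gt hw.height_lt

theorem exists_load_eq {I : Set W} (hI : ∀ v ∈ I, B.Supported v) (ρ : W → ℝ) :
    ∃ z, (∀ v ∈ I, B.load z v = ρ v) ∧ ∀ v ∉ I, z v = 0 := by
  classical
  let T : (W → ℝ) →ₗ[ℝ] W → ℝ :=
    LinearMap.pi fun v => if v ∈ I then LinearMap.proj v ∘ₗ B.load else LinearMap.proj v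
  have hT : ∀ z v, T z v = if v ∈ I then B.load z v else z v := fun z v => by
    by_cases h : v ∈ I <;> simp [T, h]
  have T_injective : Function.Injective T := by
    rw [injective_iff_map_eq_zero]
    intro z hz
    have hload : ∀ v ∈ I, B.load z v = 0 := fun v hv => by
      have := hT z v
      rwa [hz, if_pos hv, eq_comm] at this
    have hoff : ∀ v ∉ I, z v = 0 := fun v hv => by
      have := hT z v
      rwa [hz, if_neg hv, eq_comm] at this
    funext v
    have hneg := nonpos_of_load_eq_zero (x := -z) hI (fun v hv => by simp [hload v hv])
      (fun v hv => by simp [hoff v hv]) v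
    exact le_antisymm (nonpos_of_load_eq_zero hI hload hoff v) (by simpa using hneg)
  obtain ⟨z, hz⟩ := LinearMap.injective_iff_surjective.1 T_injective
    fun v => if v ∈ I then ρ v else 0
  exact ⟨z, fun v hv => by simpa [hT, hv] using congrFun hz v,
    fun v hv => by simpa [hT, hv] using congrFun hz v⟩

theorem deviation_eq_of_gap_eq {M : ℝ} (hM : ∀ {a b v}, B.Passes S a b v → -M ≤ B.gap x v a b)
    (hM₀ : 0 ≤ M) (h : B.Passes S a b v) (hgap : B.gap x v a b = -M) (hv : B.Supported v)
    (hS : ∀ w, B.Adj v w → w ∈ S) (hload : 0 ≤ B.side v a b * B.load x v) :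
    B.load x v = 0 ∧
      ∀ w, B.Adj v w → B.side v a b * B.deviation x a b w = M := by
  have hdev : B.side v a b * B.deviation x a b v = M := by
    rw [gap] at hgap
    rw [deviation]
    linarith
  have hsum : B.side v a b * B.load x v = ∑ w, B.weight v w *
      (B.side v a b * B.deviation x a b w - M) := by
    rw [load_eq_sum_deviation x v a b, Finset.mul_sum, ← hdev]
    exact Finset.sum_congr rfl fun w _ => by ring
  rw [hsum] at hload
  obtain ⟨h₀, hnbr⟩ := hv.eq_zero_of_sum_nonneg (fun w hw => sub_nonpos.2
    (deviation_le_of_gap_eq hM hM₀ h hgap hw (hS w hw)).1) hload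
  rw [← hsum] at h₀
  exact ⟨(mul_eq_zero.1 h₀).resolve_left h.side_ne_zero, fun w hw => sub_eq_zero.1 (hnbr w hw)⟩

theorem gap_nonneg_of_load_nonneg (hS : ∀ {a b v}, B.Passes S a b v →
      B.Supported v ∧ (∀ w, B.Adj v w → w ∈ S) ∧ 0 ≤ B.side v a b * B.load x v)
    (h : B.Passes S a b v) : 0 ≤ B.gap x v a b := by
  let T : Set (W × W × W) := {t | B.Passes S t.2.1 t.2.2 t.1}
  obtain ⟨⟨v₀, a₀, b₀⟩, h₀, hmin, hlow⟩ := exists_lex_min (T := T) ⟨(v, a, b), h⟩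
    (fun t => B.gap x t.1 t.2.1 t.2.2) fun t => B.height t.1
  refine le_trans ?_ (hmin (v, a, b) h)
  by_contra! hneg
  obtain ⟨hv₀, hnbr, hload⟩ := hS h₀
  obtain ⟨w, hw⟩ := hv₀.1
  have hM : ∀ {a b v}, B.Passes S a b v → - -B.gap x v₀ a₀ b₀ ≤ B.gap x v a b :=
    fun {a b v} h => (neg_neg _).trans_le (hmin (v, a, b) h)
  have hdev := (deviation_eq_of_gap_eq hM (by linarith) h₀ (neg_neg _).symm hv₀ hnbr hload).2
    w (Or.inr hw)
  obtain ⟨c, d, e, hpass, hgap, hlt⟩ := (deviation_le_of_gap_eq hM (by linarith) h₀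
    (neg_neg _).symm (Or.inr hw) (hnbr w (Or.inr hw))).2 hdev (by linarith)
  exact (hlow (c, d, e) hpass (hgap.trans (neg_neg _))).not_gt (hlt hw.height_lt)

end BarSystem

/-! ### Removing contacts -/

namespace BarSystem

variable {W : Type*} (B : BarSystem W) {S : Set W} {x z : W → ℝ} {a b v w : W}

/-- The vertices whose height is passed by some line of sight inside `S`. -/
def passed (S : Set W) : Set W := {v | ∃ a b, B.Passes S a b v}

/-- The vertices lying on the line joining `a` and `b`. -/
def onLine (x : W → ℝ) (a b : W) : Set W := {v | x v = B.line x a b (B.height v)}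

/-- The triples `(v, a, b)` for which `v` lies on the line joining `a` and `b`, instead of beside
it. -/
def contacts (x : W → ℝ) : Set (W × W × W) :=
  {t | B.Passes univ t.2.1 t.2.2 t.1 ∧ B.gap x t.1 t.2.1 t.2.2 = 0}

variable {B}

theorem Passes.mono {T : Set W} (h : B.Passes S a b v) (hST : S ⊆ T) : B.Passes T a b v where
  __ := h
  lower_mem := hST h.lower_mem
  upper_mem := hST h.upper_mem
  mem := hST h.mem

theorem exists_side_eq [Finite W] (hS : (B.passed S).Nonempty) :
    ∃ u ∈ B.passed S, ∃ σ, ∀ a b, B.Passes S a b u → B.side u a b = σ := by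
  obtain ⟨u, hu, hleft⟩ := exists_min_image (B.passed S) B.left (toFinite _) hS
  by_cases hright : ∀ a b, B.Passes S a b u → B.side u a b = 1
  · exact ⟨u, hu, 1, hright⟩
  push Not at hright
  obtain ⟨a, b, hab, hne⟩ := hright
  have hlt : B.sight a b < B.left u := (hab.side_cases.resolve_left fun h => hne h.1).2
  have hsees := hab.sees.seesAt
  have ha : a ∉ B.passed S := fun h => by linarith [hleft a h, hsees.mem_lower.1]
  have hb : b ∉ B.passed S := fun h => by linarith [hleft b h, hsees.mem_upper.1]
  obtain ⟨w, hw, hmax⟩ := exists_max_image {w | B.Passes S a b w} B.right (toFinite _) ⟨u, hab⟩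
  refine ⟨w, ⟨a, b, hw⟩, -1, fun c d hcd => ?_⟩
  obtain ⟨-, hr⟩ | ⟨h, -⟩ := hcd.side_cases
  swap
  · exact h
  have hsees' := hcd.sees.seesAt
  have hc : c = a := by
    by_contra hca
    obtain hlt | hgt := lt_or_gt_of_ne (B.height_injective.ne hca)
    · exact ha ⟨c, d, hcd.sees, hlt, hw.lower_lt.trans hcd.lt_upper, hcd.lower_mem, hcd.upper_mem,
        hab.lower_mem⟩
    · linarith [hsees'.mem_lower.2, hmax c ⟨hab.sees, hgt, hcd.lower_lt.trans hw.lt_upper,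
        hab.lower_mem, hab.upper_mem, hcd.lower_mem⟩]
  have hd : d = b := by
    by_contra hdb
    obtain hlt | hgt := lt_or_gt_of_ne (B.height_injective.ne hdb)
    · linarith [hsees'.mem_upper.2, hmax d ⟨hab.sees, hw.lower_lt.trans hcd.lt_upper, hlt,
        hab.lower_mem, hab.upper_mem, hcd.upper_mem⟩]
    · exact hb ⟨c, d, hcd.sees, hcd.lower_lt.trans hw.lt_upper, hgt, hcd.lower_mem, hcd.upper_mem,
        hab.upper_mem⟩
  subst hc hd
  linarith [hleft w ⟨c, d, hw⟩, B.left_le_right w]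

theorem Adj.symm (h : B.Adj v w) : B.Adj w v := Or.symm h

theorem Adj.ne (h : B.Adj v w) : v ≠ w := by
  rintro rfl
  obtain h | h := h <;> exact lt_irrefl _ h.height_lt

theorem lower_mem_onLine : a ∈ B.onLine x a b := line_lower.symm

theorem upper_mem_onLine (h : B.height a < B.height b) : b ∈ B.onLine x a b :=
  (line_upper h).symm

theorem onLine_eq_of_mem {c d : W} (hvw : v ≠ w) (hv : v ∈ B.onLine x a b)
    (hw : w ∈ B.onLine x a b) (hv' : v ∈ B.onLine x c d) (hw' : w ∈ B.onLine x c d) :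
    B.onLine x a b = B.onLine x c d := by
  obtain ⟨m, k, hmk⟩ := exists_lineX_sub_lineX_eq (x a, B.height a) (x b, B.height b)
    (x c, B.height c) (x d, B.height d)
  change ∀ y, B.line x c d y - B.line x a b y = m * y + k at hmk
  have h₁ := hmk (B.height v)
  have h₂ := hmk (B.height w)
  rw [← hv, ← hv', sub_self] at h₁
  rw [← hw, ← hw', sub_self] at h₂
  have hm : m = 0 := by
    have : m * (B.height v - B.height w) = 0 := by linarith
    exact (mul_eq_zero.1 this).resolve_right (sub_ne_zero.2 (B.height_injective.ne hvw))
  ext u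
  have := hmk (B.height u)
  rw [hm, zero_mul, zero_add, show k = 0 by rw [hm] at h₁; linarith, sub_eq_zero] at this
  rw [onLine, mem_ofPred_eq, ← this]
  rfl

theorem Passes.gap_eq_zero_iff (h : B.Passes S a b v) :
    B.gap x v a b = 0 ↔ v ∈ B.onLine x a b := by
  rw [gap, mul_eq_zero, or_iff_right h.side_ne_zero, sub_eq_zero, eq_comm]
  rfl

theorem gap_add_smul (x z : W → ℝ) (ε : ℝ) (v a b : W) :
    B.gap (x + ε • z) v a b = B.gap x v a b + ε * B.gap z v a b := by
  simp only [gap, line, lineX, Pi.add_apply, Pi.smul_apply, smul_eq_mul]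
  ring

theorem gap_zero (v a b : W) : B.gap 0 v a b = 0 := by simp [gap, line, lineX]

open Filter Topology in
theorem exists_forall_gap_add_smul_pos [Finite W] (x z : W → ℝ) :
    ∃ ε : ℝ, 0 < ε ∧ ∀ v a b, 0 < B.gap x v a b → 0 < B.gap (x + ε • z) v a b := by
  have hsmall : ∀ᶠ ε in 𝓝[>] (0 : ℝ), ∀ v a b, 0 < B.gap x v a b →
      0 < B.gap (x + ε • z) v a b := by
    refine eventually_all.2 fun v => eventually_all.2 fun a => eventually_all.2 fun b =>
      eventually_imp_distrib_left.2 fun hpos => ?_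
    simp only [gap_add_smul]
    have hcont : ContinuousAt (fun ε : ℝ => B.gap x v a b + ε * B.gap z v a b) 0 := by fun_prop
    exact (hcont.tendsto.eventually_const_lt (by simpa using hpos)).filter_mono nhdsWithin_le_nhds
  obtain ⟨ε, hε, hε₀⟩ := (hsmall.and self_mem_nhdsWithin).exists
  exact ⟨ε, hε₀, hε⟩

section Relaxation

variable [Fintype W]

variable (B) in
/-- The line from `a` to `b` does not cross `v` to the wrong side, and `v` is in equilibrium if it
lies on that line. -/
def Balanced (x : W → ℝ) (v a b : W) : Prop :=
  0 ≤ B.gap x v a b ∧ (B.gap x v a b = 0 → B.load x v = 0)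

variable (B) in
/-- Degenerate solutions: vertices may lie on lines that ought to pass beside them, but only in
equilibrium. -/
def Relaxed (x : W → ℝ) : Prop := ∀ a b v, B.Passes univ a b v → B.Balanced x v a b

theorem Relaxed.adj_mem_onLine (hx : B.Relaxed x) (hv : B.Supported v)
    (h : B.Passes univ a b v) (hmem : v ∈ B.onLine x a b) (hw : B.Adj v w) :
    w ∈ B.onLine x a b := by
  have hgap := h.gap_eq_zero_iff.2 hmem
  have hdev := (deviation_eq_of_gap_eq (M := 0) (fun h => by simpa using (hx _ _ _ h).1) le_rfl h
    (by simpa using hgap) hv (fun w _ => mem_univ w) (by simp [(hx _ _ _ h).2 hgap])).2 w hw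
  exact sub_eq_zero.1 ((mul_eq_zero.1 hdev).resolve_left h.side_ne_zero)

theorem Relaxed.adj_mem_of_mem_passed (hx : B.Relaxed x)
    (hsupp : ∀ v ∈ B.passed univ, B.Supported v) (hv : v ∈ B.passed (B.onLine x a b))
    (hw : B.Adj v w) : w ∈ B.onLine x a b := by
  obtain ⟨c, d, h⟩ := hv
  have huniv := h.mono (subset_univ _)
  have heq : B.onLine x a b = B.onLine x c d := onLine_eq_of_mem
    (fun e => h.sees.height_lt.ne (congrArg B.height e)) h.lower_mem h.upper_mem
    lower_mem_onLine (upper_mem_onLine h.sees.height_lt)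
  rw [heq] at h ⊢
  exact hx.adj_mem_onLine (hsupp v ⟨c, d, huniv⟩) huniv h.mem hw

theorem Relaxed.onLine_eq_of_contact {c d u : W} (hx : B.Relaxed x)
    (hsupp : ∀ v ∈ B.passed univ, B.Supported v) (h : B.Passes univ c d v)
    (hmem : v ∈ B.onLine x c d) (hu : u ∈ B.passed (B.onLine x a b))
    (hnear : u = c ∨ u = d ∨ u = v ∨ B.Adj v u) : B.onLine x a b = B.onLine x c d := by
  have hv := hsupp v ⟨c, d, h⟩
  have hd : d ∈ B.onLine x c d := upper_mem_onLine h.sees.height_lt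
  obtain ⟨w, huw, hu', hw'⟩ :
      ∃ w, B.Adj u w ∧ u ∈ B.onLine x c d ∧ w ∈ B.onLine x c d := by
    obtain rfl | rfl | rfl | hvu := hnear
    · exact ⟨d, Or.inl h.sees, lower_mem_onLine, hd⟩
    · exact ⟨c, Or.inr h.sees, hd, lower_mem_onLine⟩
    · obtain ⟨w, hw⟩ := hv.1
      exact ⟨w, Or.inr hw, hmem, hx.adj_mem_onLine hv h hmem (Or.inr hw)⟩
    · exact ⟨v, hvu.symm, hx.adj_mem_onLine hv h hmem hvu, hmem⟩
  have huS : u ∈ B.onLine x a b := hu.elim fun _ ⟨_, hp⟩ => hp.mem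
  exact onLine_eq_of_mem huw.ne huS (hx.adj_mem_of_mem_passed hsupp hu huw) hu' hw'

theorem Relaxed.exists_displacement_onLine (hx : B.Relaxed x)
    (hsupp : ∀ v ∈ B.passed univ, B.Supported v) (hne : (B.passed (B.onLine x a b)).Nonempty) :
    ∃ z, (∀ c d v, B.Passes (B.onLine x a b) c d v → B.Balanced z v c d) ∧
      (∀ v ∉ B.passed (B.onLine x a b), z v = 0) ∧
      ∃ c d v, B.Passes (B.onLine x a b) c d v ∧ B.gap z v c d ≠ 0 := by
  classical
  have hsupp' : ∀ v ∈ B.passed (B.onLine x a b), B.Supported v :=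
    fun v ⟨c, d, h⟩ => hsupp v ⟨c, d, h.mono (subset_univ _)⟩
  obtain ⟨u, ⟨c, d, hu⟩, σ, hσ⟩ := exists_side_eq hne
  obtain ⟨z, hload, hz⟩ := exists_load_eq hsupp' (Pi.single u σ)
  have hnbr : ∀ {c d v}, B.Passes (B.onLine x a b) c d v → ∀ w, B.Adj v w → w ∈ B.onLine x a b :=
    fun h _ => hx.adj_mem_of_mem_passed hsupp ⟨_, _, h⟩
  have hpush : ∀ {c d v}, B.Passes (B.onLine x a b) c d v →
      0 ≤ B.side v c d * B.load z v := fun {c d v} h => by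
    rw [hload v ⟨c, d, h⟩]
    obtain rfl | hvu := eq_or_ne v u
    · rw [Pi.single_eq_same, hσ c d h]
      exact mul_self_nonneg σ
    · rw [Pi.single_eq_of_ne hvu, mul_zero]
  have hgap : ∀ {c d v}, B.Passes (B.onLine x a b) c d v → 0 ≤ B.gap z v c d :=
    gap_nonneg_of_load_nonneg fun h => ⟨hsupp' _ ⟨_, _, h⟩, hnbr h, hpush h⟩
  have hbalanced : ∀ c d v, B.Passes (B.onLine x a b) c d v → B.Balanced z v c d :=
    fun c d v h => ⟨hgap h, fun h₀ => (deviation_eq_of_gap_eq (M := 0)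
      (fun h => by simpa using hgap h) le_rfl h (by simpa using h₀) (hsupp' _ ⟨_, _, h⟩) (hnbr h)
      (hpush h)).1⟩
  refine ⟨z, hbalanced, hz, c, d, u, hu, fun h₀ => ?_⟩
  have := (hbalanced c d u hu).2 h₀
  rw [hload u ⟨c, d, hu⟩, Pi.single_eq_same, ← hσ c d hu] at this
  exact hu.side_ne_zero this

theorem Relaxed.exists_displacement (hx : B.Relaxed x)
    (hsupp : ∀ v ∈ B.passed univ, B.Supported v) (hne : (B.contacts x).Nonempty) :
    ∃ z, (∀ t ∈ B.contacts x, B.Balanced z t.1 t.2.1 t.2.2) ∧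
      ∃ t ∈ B.contacts x, B.gap z t.1 t.2.1 t.2.2 ≠ 0 := by
  obtain ⟨⟨v₀, a, b⟩, h₀, hgap₀⟩ := hne
  have hv₀ : B.Passes (B.onLine x a b) a b v₀ := ⟨h₀.sees, h₀.lower_lt, h₀.lt_upper,
    lower_mem_onLine, upper_mem_onLine h₀.sees.height_lt, h₀.gap_eq_zero_iff.1 hgap₀⟩
  obtain ⟨z, hbalanced, hz, c, d, v, hpass, hgap⟩ :=
    hx.exists_displacement_onLine hsupp ⟨v₀, a, b, hv₀⟩
  refine ⟨z, ?_, (v, c, d), ⟨hpass.mono (subset_univ _), ?_⟩, hgap⟩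
  · rintro ⟨v, c, d⟩ ⟨hpass, hgap⟩
    have hmem := hpass.gap_eq_zero_iff.1 hgap
    by_cases heq : B.onLine x a b = B.onLine x c d
    · exact hbalanced c d v ⟨hpass.sees, hpass.lower_lt, hpass.lt_upper, heq ▸ lower_mem_onLine,
        heq ▸ upper_mem_onLine hpass.sees.height_lt, heq ▸ hmem⟩
    · have hoff : ∀ u, (u = c ∨ u = d ∨ u = v ∨ B.Adj v u) → z u = 0 := fun u hu =>
        hz u fun hu' => heq (hx.onLine_eq_of_contact hsupp hpass hmem hu' hu)
      refine ⟨?_, fun _ => ?_⟩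
      · simp [gap, line, lineX, hoff c, hoff d, hoff v]
      · rw [load_apply]
        refine Finset.sum_eq_zero fun w _ => ?_
        by_cases hw : B.Adj v w
        · simp [hoff v, hoff w, hw]
        · rw [weight_eq_zero hw, zero_mul]
  · rw [hpass.gap_eq_zero_iff, ← onLine_eq_of_mem
      (fun e => hpass.sees.height_lt.ne (congrArg B.height e)) hpass.lower_mem hpass.upper_mem
      lower_mem_onLine (upper_mem_onLine hpass.sees.height_lt)]
    exact hpass.mem

theorem Relaxed.exists_contacts_ssubset (hx : B.Relaxed x)
    (hz : ∀ t ∈ B.contacts x, B.Balanced z t.1 t.2.1 t.2.2)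
    (hne : ∃ t ∈ B.contacts x, B.gap z t.1 t.2.1 t.2.2 ≠ 0) :
    ∃ x', B.Relaxed x' ∧ B.contacts x' ⊂ B.contacts x := by
  obtain ⟨ε, hε₀, hε⟩ := exists_forall_gap_add_smul_pos x z
  have hcontact : ∀ t : W × W × W, B.Passes univ t.2.1 t.2.2 t.1 →
      B.gap (x + ε • z) t.1 t.2.1 t.2.2 = 0 → B.gap x t.1 t.2.1 t.2.2 = 0 := fun t ht h =>
    ((hx _ _ _ ht).1.eq_or_lt.resolve_right fun hpos => (hε _ _ _ hpos).ne' h).symm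
  refine ⟨x + ε • z, fun a b v h => ?_, ?_⟩
  · obtain h₀ | hpos := (hx a b v h).1.eq_or_lt
    · obtain ⟨hgap, hload⟩ := hz (v, a, b) ⟨h, h₀.symm⟩
      rw [Balanced, gap_add_smul, ← h₀, zero_add]
      refine ⟨mul_nonneg hε₀.le hgap, fun hzero => ?_⟩
      have hload_z := hload ((mul_eq_zero.1 hzero).resolve_left hε₀.ne')
      rw [map_add, map_smul, Pi.add_apply, Pi.smul_apply, (hx a b v h).2 h₀.symm]
      simpa using Or.inr hload_z
    · have := hε v a b hpos
      exact ⟨this.le, fun h₀ => absurd h₀ this.ne'⟩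
  · obtain ⟨t, ht, hgap⟩ := hne
    have hsub : B.contacts (x + ε • z) ⊆ B.contacts x :=
      fun t ht => ⟨ht.1, hcontact t ht.1 ht.2⟩
    refine (ssubset_iff_of_subset hsub).2 ⟨t, ht, fun h => ?_⟩
    have := h.2
    rw [gap_add_smul, ht.2, zero_add] at this
    exact hgap ((mul_eq_zero.1 this).resolve_left hε₀.ne')

end Relaxation

theorem exists_gap_pos [Finite W] (hsupp : ∀ v ∈ B.passed univ, B.Supported v) :
    ∃ x : W → ℝ, ∀ a b v, B.Passes univ a b v → 0 < B.gap x v a b := by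
  cases nonempty_fintype W
  have hzero : B.Relaxed 0 := fun a b v _ => ⟨(gap_zero v a b).ge, fun _ => by simp⟩
  obtain ⟨x, hx, hmin⟩ := exists_minimalFor_of_wellFoundedLT B.Relaxed B.contacts ⟨0, hzero⟩
  obtain hempty | hne := (B.contacts x).eq_empty_or_nonempty
  · refine ⟨x, fun a b v h => (hx a b v h).1.lt_of_ne fun h₀ => ?_⟩
    exact hempty.le (show (v, a, b) ∈ B.contacts x from ⟨h, h₀.symm⟩)
  · obtain ⟨z, hz, hne'⟩ := hx.exists_displacement hsupp hne
    obtain ⟨x', hx', hlt⟩ := hx.exists_contacts_ssubset hz hne'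
    exact absurd (hmin hx' hlt.le) hlt.not_ge

end BarSystem

/-! ### From bars to an upward embedding -/

theorem exists_int_mem_of_isOpen {ι : Type*} [Finite ι] {U : Set (ι → ℝ)} (hU : IsOpen U)
    (hne : U.Nonempty) (hcone : ∀ c : ℝ, 0 < c → ∀ x ∈ U, c • x ∈ U) :
    ∃ n : ι → ℤ, (fun i => (n i : ℝ)) ∈ U := by
  obtain ⟨q, hq⟩ := (DenseRange.piMap fun _ : ι => Rat.denseRange_cast (𝕜 := ℝ)).exists_mem_open
    hU hne
  obtain ⟨b, hb⟩ := IsLocalization.exist_integer_multiples_of_finite (nonZeroDivisors ℤ) q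
  choose m hm using hb
  have hb₀ : ((b : ℤ) : ℝ) ≠ 0 := Int.cast_ne_zero.2 (nonZeroDivisors.ne_zero b.2)
  refine ⟨fun i => b * m i, ?_⟩
  convert hcone _ (pow_pos (abs_pos.2 hb₀) 2) _ hq using 1
  funext i
  have hmi : (m i : ℚ) = (b : ℤ) * q i := by simpa using hm i
  have hmi' : (m i : ℝ) = ((b : ℤ) : ℝ) * q i := by exact_mod_cast hmi
  rw [Int.cast_mul, hmi', Pi.smul_apply, smul_eq_mul, sq_abs, Pi.map_apply]
  ring

namespace BarSystem

variable {W : Type*} {B : BarSystem W} {x : W → ℝ} {a b c d e v w : W}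

section Embedding

theorem gap_smul (k : ℝ) (x : W → ℝ) (v a b : W) : B.gap (k • x) v a b = k * B.gap x v a b := by
  rw [← zero_add (k • x), gap_add_smul, gap_zero, zero_add]

theorem continuous_gap (v a b : W) : Continuous fun x => B.gap x v a b := by
  simp only [gap, line, lineX, div_eq_mul_inv]
  fun_prop

variable (B) in
/-- How far, at height `y`, the line from `c` to `d` lies on that side of the line from `a` to `b`
which is prescribed by the two lines of sight. -/
noncomputable def separation (x : W → ℝ) (a b c d : W) (y : ℝ) : ℝ :=
  Real.sign (B.sight c d - B.sight a b) * (B.line x c d y - B.line x a b y)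

theorem separation_swap (a b c d : W) (y : ℝ) :
    B.separation x c d a b y = B.separation x a b c d y := by
  rw [separation, separation, ← neg_sub, Real.sign_neg, ← neg_sub (B.line x c d y)]
  ring

theorem exists_separation_eq (x : W → ℝ) (a b c d : W) :
    ∃ m k, ∀ y, B.separation x a b c d y = m * y + k := by
  obtain ⟨m, k, hmk⟩ := exists_lineX_sub_lineX_eq (x a, B.height a) (x b, B.height b)
    (x c, B.height c) (x d, B.height d)
  refine ⟨Real.sign (B.sight c d - B.sight a b) * m, Real.sign (B.sight c d - B.sight a b) * k,
    fun y => ?_⟩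
  rw [separation, line, line, hmk]
  ring

theorem separation_pos (hx : ∀ a b v, B.Passes univ a b v → 0 < B.gap x v a b)
    (hab : B.Sees a b) (hcd : B.Sees c d) (he : e = c ∨ e = d) (hae : B.height a < B.height e)
    (heb : B.height e < B.height b) : 0 < B.separation x a b c d (B.height e) := by
  have hpass : B.Passes univ a b e := ⟨hab, hae, heb, trivial, trivial, trivial⟩
  have hmem : B.sight c d ∈ B.span e ∧ B.line x c d (B.height e) = x e := by
    obtain rfl | rfl := he
    exacts [⟨hcd.seesAt.mem_lower, line_lower⟩,
      ⟨hcd.seesAt.mem_upper, line_upper hcd.height_lt⟩]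
  have hgap := hx a b e hpass
  rw [gap, hpass.side_eq_sign hmem.1, ← neg_sub, Real.sign_neg] at hgap
  rw [separation, hmem.2]
  linarith

theorem separation_lower (hx : ∀ a b v, B.Passes univ a b v → 0 < B.gap x v a b)
    (hab : B.Sees a b) (hcd : B.Sees c d) (had : B.height a < B.height d)
    (hcb : B.height c < B.height b) :
    a = c ∨ 0 < B.separation x a b c d (max (B.height a) (B.height c)) := by
  obtain h | h | h := lt_trichotomy (B.height a) (B.height c)
  · rw [max_eq_right h.le]
    exact Or.inr (separation_pos hx hab hcd (Or.inl rfl) h hcb)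
  · exact Or.inl (B.height_injective h)
  · rw [max_eq_left h.le, ← separation_swap]
    exact Or.inr (separation_pos hx hcd hab (Or.inl rfl) h had)

theorem separation_upper (hx : ∀ a b v, B.Passes univ a b v → 0 < B.gap x v a b)
    (hab : B.Sees a b) (hcd : B.Sees c d) (had : B.height a < B.height d)
    (hcb : B.height c < B.height b) :
    b = d ∨ 0 < B.separation x a b c d (min (B.height b) (B.height d)) := by
  obtain h | h | h := lt_trichotomy (B.height b) (B.height d)
  · rw [min_eq_left h.le, ← separation_swap]
    exact Or.inr (separation_pos hx hcd hab (Or.inr rfl) hcb h)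
  · exact Or.inl (B.height_injective h)
  · rw [min_eq_right h.le]
    exact Or.inr (separation_pos hx hab hcd (Or.inr rfl) had h)

theorem eq_of_separation_eq_zero {s t y : ℝ} (hs : B.separation x a b c d s = 0)
    (ht : B.separation x a b c d t = 0) (hy : B.separation x a b c d y ≠ 0) : s = t := by
  obtain ⟨m, k, hmk⟩ := exists_separation_eq (B := B) x a b c d
  rw [hmk] at hs ht hy
  have hm : m ≠ 0 := by
    rintro rfl
    exact hy (by linarith)
  exact mul_left_cancel₀ hm (by linarith)

theorem separation_pos_of_mem_Icc {s t y : ℝ} (hs : 0 < B.separation x a b c d s)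
    (ht : 0 < B.separation x a b c d t) (hy : y ∈ Icc s t) : 0 < B.separation x a b c d y := by
  obtain ⟨m, k, hmk⟩ := exists_separation_eq (B := B) x a b c d
  rw [hmk] at hs ht ⊢
  obtain hm | hm := le_total 0 m <;> nlinarith [hy.1, hy.2]

theorem exists_common_endpoint (hx : ∀ a b v, B.Passes univ a b v → 0 < B.gap x v a b)
    (hab : B.Sees a b) (hcd : B.Sees c d) (hne : ¬(a = c ∧ b = d)) {y : ℝ}
    (hy : y ∈ Icc (B.height a) (B.height b)) (hy' : y ∈ Icc (B.height c) (B.height d))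
    (heq : B.line x a b y = B.line x c d y) :
    ∃ w ∈ ({a, b} ∩ {c, d} : Set W), B.height w = y := by
  obtain hbc | hcb := le_or_gt (B.height b) (B.height c)
  · obtain rfl := B.height_injective (hbc.antisymm (hy'.1.trans hy.2))
    exact ⟨b, ⟨Or.inr rfl, Or.inl rfl⟩, hy'.1.antisymm hy.2⟩
  obtain hda | had := le_or_gt (B.height d) (B.height a)
  · obtain rfl := B.height_injective (hda.antisymm (hy.1.trans hy'.2))
    exact ⟨d, ⟨Or.inl rfl, Or.inr rfl⟩, hy.1.antisymm hy'.2⟩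
  have hzero : B.separation x a b c d y = 0 := by rw [separation, heq, sub_self, mul_zero]
  obtain rfl | hlower := separation_lower hx hab hcd had hcb
  · have hupper := (separation_upper hx hab hcd had hcb).resolve_left fun h => hne ⟨rfl, h⟩
    refine ⟨a, ⟨Or.inl rfl, Or.inl rfl⟩, eq_of_separation_eq_zero ?_ hzero hupper.ne'⟩
    rw [separation, line_lower, line_lower, sub_self, mul_zero]
  obtain rfl | hupper := separation_upper hx hab hcd had hcb
  · refine ⟨b, ⟨Or.inr rfl, Or.inr rfl⟩, eq_of_separation_eq_zero ?_ hzero hlower.ne'⟩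
    rw [separation, line_upper hab.height_lt, line_upper hcd.height_lt, sub_self, mul_zero]
  · have hmem := And.intro (max_le hy.1 hy'.1) (le_min hy.2 hy'.2)
    exact absurd hzero (separation_pos_of_mem_Icc hlower hupper hmem).ne'

theorem isUpwardEmbedding_of_gap_pos
    (hx : ∀ a b v, B.Passes univ a b v → 0 < B.gap x v a b) :
    IsUpwardEmbedding B.Sees fun v => (x v, B.height v) where
  injective v w h := B.height_injective (congrArg Prod.snd h)
  lt_snd h := h.height_lt
  notMem_segment {a b v} hab hva hvb hv := by
    obtain ⟨⟨h₀, h₁⟩, heq⟩ := (mem_segment_iff_lineX hab.height_lt).1 hv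
    refine (hx a b v ⟨hab, h₀.lt_of_ne (B.height_injective.ne hva).symm,
      h₁.lt_of_ne (B.height_injective.ne hvb), trivial, trivial, trivial⟩).ne' ?_
    rw [gap, line, ← heq, sub_self, mul_zero]
  inter_subset {a b c d} hab hcd hne P hP := by
    obtain ⟨hy, h⟩ := (mem_segment_iff_lineX hab.height_lt).1 hP.1
    obtain ⟨hy', h'⟩ := (mem_segment_iff_lineX hcd.height_lt).1 hP.2
    obtain ⟨w, hw, hwy⟩ := exists_common_endpoint hx hab hcd hne hy hy' (h.symm.trans h')
    refine ⟨w, hw, Prod.ext ?_ hwy⟩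
    rw [h, ← hwy]
    obtain rfl | rfl := hw.1
    exacts [(lineX_lower _ _).symm, (lineX_upper hab.height_lt).symm]

end Embedding

section Enclosure

variable (B) in
/-- The bar system with a floor (`inr false`) and a ceiling (`inr true`) of half-width `M` added at
heights `-M` and `M`. -/
def enclose (M : ℝ) (hM : 0 < M) (hheight : ∀ v, |B.height v| < M) : BarSystem (W ⊕ Bool) where
  height := Sum.elim B.height fun t => cond t M (-M)
  left := Sum.elim B.left fun _ => -M
  right := Sum.elim B.right fun _ => M
  left_le_right := by
    rintro (v | t)
    exacts [B.left_le_right v, by simpa using hM.le]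
  height_injective := by
    refine B.height_injective.sumElim ?_ ?_
    · rintro (_ | _) (_ | _) h <;> simp at h ⊢ <;> linarith
    · rintro v (_ | _) h
      · exact (abs_lt.1 (hheight v)).1.ne h.symm
      · exact (abs_lt.1 (hheight v)).2.ne h

theorem exists_sees_lower [Finite W] {t : ℝ} (hlt : B.height w < B.height v) (hw : t ∈ B.span w)
    (hv : t ∈ B.span v) : ∃ u, B.Sees u v := by
  obtain ⟨u, hu, hmax⟩ := exists_max_image {u | B.height u < B.height v ∧ t ∈ B.span u} B.height
    (toFinite _) ⟨w, hlt, hw⟩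
  exact ⟨u, t, hu.1, hu.2, hv, fun z huz hzv hz => (hmax z ⟨hzv, hz⟩).not_gt huz⟩

theorem exists_sees_upper [Finite W] {t : ℝ} (hlt : B.height v < B.height w) (hw : t ∈ B.span w)
    (hv : t ∈ B.span v) : ∃ u, B.Sees v u := by
  obtain ⟨u, hu, hmin⟩ := exists_min_image {u | B.height v < B.height u ∧ t ∈ B.span u} B.height
    (toFinite _) ⟨w, hlt, hw⟩
  exact ⟨u, t, hu.1, hv, hu.2, fun z hvz hzu hz => (hmin z ⟨hvz, hz⟩).not_gt hzu⟩

variable {M : ℝ} {hM : 0 < M} {hheight : ∀ v, |B.height v| < M}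

theorem Sees.enclose (h : B.Sees a b) : (B.enclose M hM hheight).Sees (.inl a) (.inl b) := by
  obtain ⟨t, h⟩ := h
  refine ⟨t, h.height_lt, h.mem_lower, h.mem_upper, ?_⟩
  rintro (v | _ | _) h₀ h₁
  · exact h.notMem_span v h₀ h₁
  · exact absurd h₀ (abs_lt.1 (hheight a)).1.not_gt
  · exact absurd h₁ (abs_lt.1 (hheight b)).2.not_gt

theorem supported_enclose [Finite W] (hleft : ∀ v, |B.left v| ≤ M) {v : W ⊕ Bool}
    (hv : v ∈ (B.enclose M hM hheight).passed univ) : (B.enclose M hM hheight).Supported v := by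
  obtain ⟨a, b, h⟩ := hv
  have hbound : ∀ w, |(B.enclose M hM hheight).height w| ≤ M := by
    rintro (w | _ | _)
    · exact (hheight w).le
    · simp [enclose, abs_of_pos hM]
    · simp [enclose, abs_of_pos hM]
  obtain v | _ | _ := v
  · have hmem : B.left v ∈ Icc (-M) M := abs_le.1 (hleft v)
    have hself : B.left v ∈ (B.enclose M hM hheight).span (.inl v) :=
      ⟨le_rfl, B.left_le_right v⟩
    exact ⟨exists_sees_lower (w := .inr false) (abs_lt.1 (hheight v)).1 hmem hself,
      exists_sees_upper (w := .inr true) (abs_lt.1 (hheight v)).2 hmem hself⟩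
  · exact absurd h.lower_lt (abs_le.1 (hbound a)).1.not_gt
  · exact absurd h.lt_upper (abs_le.1 (hbound b)).2.not_gt

end Enclosure

variable (B) in
theorem exists_isUpwardEmbedding [Finite W] :
    ∃ x : W → ℤ, IsUpwardEmbedding B.Sees fun v => ((x v : ℝ), B.height v) := by
  obtain ⟨K, hK⟩ := Finite.exists_le fun v => max |B.height v| |B.left v|
  have hM : 0 < |K| + 1 := by positivity
  have hheight : ∀ v, |B.height v| < |K| + 1 := fun v => by
    linarith [le_max_left |B.height v| |B.left v|, hK v, le_abs_self K]
  have hleft : ∀ v, |B.left v| ≤ |K| + 1 := fun v => by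
    linarith [le_max_right |B.height v| |B.left v|, hK v, le_abs_self K]
  let E := B.enclose (|K| + 1) hM hheight
  let U : Set (W ⊕ Bool → ℝ) := {x | ∀ a b v, E.Passes univ a b v → 0 < E.gap x v a b}
  have hopen : IsOpen U := by
    simp only [U, ofPred_forall]
    exact isOpen_iInter_of_finite fun a => isOpen_iInter_of_finite fun b =>
      isOpen_iInter_of_finite fun v => isOpen_iInter_of_finite fun _ =>
        isOpen_lt continuous_const (continuous_gap v a b)
  obtain ⟨n, hn⟩ := exists_int_mem_of_isOpen hopen
    (exists_gap_pos fun v hv => supported_enclose hleft hv) fun k hk x hx a b v h => by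
      rw [gap_smul]
      exact mul_pos hk (hx a b v h)
  exact ⟨n ∘ Sum.inl, (isUpwardEmbedding_of_gap_pos hn).comap Sum.inl_injective Sees.enclose⟩

end BarSystem

section FromDrawing

variable {V : Type*} {A : V → V → Prop} {G : SimpleGraph V} {D : OrthDrawing G}

theorem OrthDrawing.IsPlanar.y1_lt_y1 {u v : V} {p q : Pt} (hD : D.IsPlanar) (huv : u ≠ v)
    (hpq₁ : p.1 = q.1) (hpq₂ : p.2 < q.2) (hp : p ∈ (D.box u).pts) (hq : q ∈ (D.box v).pts) :
    (D.box u).y1 < (D.box v).y1 := by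
  by_contra! hle
  have hmin : (D.box u).y1 ≤ min q.2 (D.box u).y2 := le_min (hp.2.1.trans hpq₂.le) (D.box u).hy
  have hmem : ((p.1, min q.2 (D.box u).y2) : Pt) ∈ (D.box u).pts :=
    ⟨hp.1, hmin, min_le_right _ _⟩
  exact disjoint_left.1 (hD.1 u v huv) hmem
    ⟨hpq₁ ▸ hq.1, hle.trans hmin, (min_le_left _ _).trans hq.2.2⟩

theorem OrthDrawing.IsPlanar.fst_notMem_Icc {u v w : V} {p q : Pt} (hD : D.IsPlanar)
    (huv : G.Adj u v) (hchain : D.chain u v = [p, q]) (hpq₁ : p.1 = q.1)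
    (hp : p ∈ (D.box u).pts) (hq : q ∈ (D.box v).pts) (hwu : w ≠ u) (hwv : w ≠ v)
    (huw : (D.box u).y1 ≤ (D.box w).y1) (hwv' : (D.box w).y1 ≤ (D.box v).y1) :
    p.1 ∉ Icc (D.box w).x1 (D.box w).x2 := by
  intro hmem
  have hcorner : (p.1, (D.box w).y1) ∈ (D.box w).pts := ⟨hmem, le_rfl, (D.box w).hy⟩
  obtain hle | hlt := le_or_gt (D.box w).y1 p.2
  · exact disjoint_left.1 (hD.1 w u hwu) hcorner ⟨hp.1, huw, hle.trans hp.2.2⟩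
  obtain hle' | hlt' := le_or_gt q.2 (D.box w).y1
  · exact disjoint_left.1 (hD.1 w v hwv) hcorner
      ⟨hpq₁ ▸ hq.1, hq.2.1.trans hle', hwv'.trans (D.box v).hy⟩
  · have hcurve : (p.1, (D.box w).y1) ∈ D.curve u v := by
      rw [OrthDrawing.curve, hchain, chainSet_pair, show q = (p.1, q.2) from Prod.ext hpq₁.symm rfl]
      exact mem_vertical_segment.2 ⟨rfl, mem_uIcc_of_le hlt.le hlt'.le⟩
    obtain h | h := hD.2.2.2.1 u v w huv ⟨hcurve, hcorner⟩
    exacts [hwu h.1, hwv h.1]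

theorem exists_barSystem_of_isPlanar [Finite V] (hAG : ∀ u v, A u v → G.Adj u v)
    (hD : D.IsPlanar) (hA : ∀ u v, A u v → ∃ p q : Pt, D.chain u v = [p, q] ∧ p.1 = q.1 ∧
      p.2 < q.2 ∧ p ∈ (D.box u).pts ∧ q ∈ (D.box v).pts) :
    ∃ B : BarSystem V, (∀ u v, A u v → B.Sees u v) ∧ ∀ v, ∃ n : ℤ, B.height v = n := by
  obtain ⟨Y, Y_injective, hY⟩ := exists_rank fun v => (D.box v).y1
  have hYle : ∀ {u v}, (Y u : ℝ) < Y v → (D.box u).y1 ≤ (D.box v).y1 := fun h =>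
    le_of_not_gt fun h' => (hY _ _ h').not_gt (Nat.cast_lt.1 h)
  let B : BarSystem V :=
    { height := fun v => Y v
      left := fun v => (D.box v).x1
      right := fun v => (D.box v).x2
      left_le_right := fun v => (D.box v).hx
      height_injective := Nat.cast_injective.comp Y_injective }
  refine ⟨B, fun u v huv => ?_, fun v => ⟨Y v, by simp [B]⟩⟩
  obtain ⟨p, q, hchain, hpq₁, hpq₂, hp, hq⟩ := hA u v huv
  refine ⟨p.1, Nat.cast_lt.2 (hY _ _ (hD.y1_lt_y1 (hAG u v huv).ne hpq₁ hpq₂ hp hq)), hp.1,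
    hpq₁ ▸ hq.1, fun w huw hwv => hD.fst_notMem_Icc (hAG u v huv) hchain hpq₁ hp hq ?_ ?_
      (hYle huw) (hYle hwv)⟩
  · rintro rfl
    exact lt_irrefl _ huw
  · rintro rfl
    exact lt_irrefl _ hwv

end FromDrawing

/-! ### From an upward embedding to bars -/

/-- A family of strands: the strand `a` is the graph of `pos a` over the interval from `lo a` to
`hi a`, drawn with the parameter running upwards. -/
structure StrandFamily (ι α β : Type*) where
  lo : ι → α
  hi : ι → α
  pos : ι → α → β

namespace StrandFamily

variable {ι α β : Type*} [LinearOrder α] [Preorder β] (F : StrandFamily ι α β) {a b c : ι}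

/-- The levels reached by the strand `a`. -/
def range (a : ι) : Set α := Icc (F.lo a) (F.hi a)

/-- At some common level, the strand `a` runs to the left of the strand `b`. -/
def IsLeftOf (a b : ι) : Prop := ∃ t ∈ F.range a ∩ F.range b, F.pos a t < F.pos b t

/-- No two strands indexed by `S` change sides. -/
def NoncrossingOn (S : Set ι) : Prop :=
  ∀ a ∈ S, ∀ b ∈ S, ∀ s ∈ F.range a ∩ F.range b, ∀ t ∈ F.range a ∩ F.range b,
    F.pos a s < F.pos b s → F.pos a t ≤ F.pos b t

variable {F}

theorem NoncrossingOn.isLeftOf_trans {S : Set ι} (h : F.NoncrossingOn S) (ha : a ∈ S) (hb : b ∈ S)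
    (hc : c ∈ S) (hlo : F.lo a ≤ F.lo b) (hlo' : F.lo c ≤ F.lo b) (hab : F.IsLeftOf a b)
    (hbc : F.IsLeftOf b c) : F.IsLeftOf a c := by
  obtain ⟨s, hs, hlt⟩ := hab
  obtain ⟨t, ht, hlt'⟩ := hbc
  obtain hst | hts := le_total s t
  · have hsc : s ∈ F.range c := ⟨hlo'.trans hs.2.1, hst.trans ht.2.2⟩
    exact ⟨s, ⟨hs.1, hsc⟩, hlt.trans_le (h b hb c hc t ht s ⟨hs.2, hsc⟩ hlt')⟩
  · have hta : t ∈ F.range a := ⟨hlo.trans ht.1.1, hts.trans hs.1.2⟩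
    exact ⟨t, ⟨hta, ht.2⟩, (h a ha b hb s hs t ⟨hta, ht.1⟩ hlt).trans_lt hlt'⟩

theorem NoncrossingOn.exists_strictMono {S : Finset ι} (h : F.NoncrossingOn S) :
    ∃ ρ : ι → ℚ, ∀ a ∈ S, ∀ b ∈ S, F.IsLeftOf a b → ρ a < ρ b := by
  classical
  induction S using Finset.induction_on_max_value F.lo with
  | empty => exact ⟨0, by simp⟩
  | insert c S hc hmax ih =>
    obtain ⟨ρ, hρ⟩ := ih fun a ha b hb =>
      h a (Finset.mem_insert_of_mem ha) b (Finset.mem_insert_of_mem hb)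
    obtain ⟨m, hleft, hright⟩ := Order.exists_between_finsets ({a ∈ S | F.IsLeftOf a c}.image ρ)
      ({b ∈ S | F.IsLeftOf c b}.image ρ) <| by
        simp only [Finset.forall_mem_image, Finset.mem_filter]
        rintro a ⟨ha, hac⟩ b ⟨hb, hcb⟩
        exact hρ a ha b hb (h.isLeftOf_trans (Finset.mem_insert_of_mem ha)
          (Finset.mem_insert_self c S) (Finset.mem_insert_of_mem hb) (hmax a ha) (hmax b hb)
          hac hcb)
    simp only [Finset.forall_mem_image, Finset.mem_filter] at hleft hright
    have hρ_of_mem : ∀ a ∈ S, Function.update ρ c m a = ρ a := fun a ha =>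
      Function.update_of_ne (ne_of_mem_of_not_mem ha hc) m ρ
    refine ⟨Function.update ρ c m, fun a ha b hb hab => ?_⟩
    obtain rfl | haS := Finset.mem_insert.1 ha <;> obtain rfl | hbS := Finset.mem_insert.1 hb
    · obtain ⟨t, -, hlt⟩ := hab
      exact absurd hlt (lt_irrefl _)
    · rw [Function.update_self, hρ_of_mem b hbS]
      exact hright ⟨hbS, hab⟩
    · rw [Function.update_self, hρ_of_mem a haS]
      exact hleft ⟨haS, hab⟩
    · rw [hρ_of_mem a haS, hρ_of_mem b hbS]
      exact hρ a haS b hbS hab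

theorem NoncrossingOn.exists_rank [Finite ι] {S : Set ι} (h : F.NoncrossingOn S) :
    ∃ ρ : ι → ℕ, Function.Injective ρ ∧ ∀ a ∈ S, ∀ b ∈ S, F.IsLeftOf a b → ρ a < ρ b := by
  obtain ⟨T, rfl⟩ := S.toFinite.exists_finset_coe
  obtain ⟨ρ, hρ⟩ := h.exists_strictMono
  obtain ⟨r, r_injective, hr⟩ := _root_.exists_rank ρ
  exact ⟨r, r_injective, fun a ha b hb hab => hr a b (hρ a ha b hb hab)⟩

end StrandFamily

section Columns

variable {V : Type*} {A : V → V → Prop} {pos : V → Pt} {o : V × V} {v : V} {y : ℝ}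

/-- The straight-line segments between the points `pos v`, as strands. -/
noncomputable def segmentStrands (pos : V → Pt) : StrandFamily (V × V) ℝ ℝ where
  lo o := (pos o.1).2
  hi o := (pos o.2).2
  pos o := lineX (pos o.1) (pos o.2)

/-- The strands which occur in the drawing of `A`: its edges, and a degenerate strand for each
vertex. -/
def drawnStrands (A : V → V → Prop) : Set (V × V) := {o | A o.1 o.2 ∨ o.1 = o.2}

theorem rel_of_mem_range_segmentStrands {s t : ℝ} (ho : o ∈ drawnStrands A)
    (hs : s ∈ (segmentStrands pos).range o) (ht : t ∈ (segmentStrands pos).range o)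
    (hst : s ≠ t) : A o.1 o.2 := by
  refine ho.resolve_right fun heq => hst ?_
  have hsingle : (segmentStrands pos).range o = {(pos o.1).2} := by
    simp only [StrandFamily.range, segmentStrands, ← heq, Icc_self]
  rw [hsingle] at hs ht
  exact hs.trans ht.symm

namespace IsUpwardEmbedding

theorem mem_range_of_incident (h : IsUpwardEmbedding A pos) (ho : o ∈ drawnStrands A)
    (hv : v = o.1 ∨ v = o.2) : (pos v).2 ∈ (segmentStrands pos).range o ∧
      (segmentStrands pos).pos o (pos v).2 = (pos v).1 := by
  obtain hA | heq := ho
  · have hlt := h.lt_snd hA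
    obtain rfl | rfl := hv
    exacts [⟨⟨le_rfl, hlt.le⟩, lineX_lower _ _⟩, ⟨⟨hlt.le, le_rfl⟩, lineX_upper hlt⟩]
  · obtain rfl : v = o.1 := hv.elim id fun hv => hv.trans heq.symm
    exact ⟨⟨le_rfl, (congrArg (fun w => (pos w).2) heq).le⟩, lineX_lower _ _⟩

theorem mk_mem_segment (h : IsUpwardEmbedding A pos) (hA : A o.1 o.2)
    (hy : y ∈ (segmentStrands pos).range o) :
    ((segmentStrands pos).pos o y, y) ∈ segment ℝ (pos o.1) (pos o.2) :=
  (mem_segment_iff_lineX (h.lt_snd hA)).2 ⟨hy, rfl⟩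

theorem noncrossingOn (h : IsUpwardEmbedding A pos) :
    (segmentStrands pos).NoncrossingOn (drawnStrands A) := by
  intro a ha b hb s hs t ht hlt
  by_contra! hgt
  have hst : s ≠ t := by
    rintro rfl
    exact lt_asymm hlt hgt
  have hA := rel_of_mem_range_segmentStrands ha hs.1 ht.1 hst
  have hB := rel_of_mem_range_segmentStrands hb hs.2 ht.2 hst
  have hne : ¬(a.1 = b.1 ∧ a.2 = b.2) := by
    rintro ⟨h₁, h₂⟩
    rw [Prod.ext h₁ h₂] at hlt
    exact lt_irrefl _ hlt
  obtain ⟨y, hy, heq⟩ := exists_mem_uIoo_lineX_eq hlt hgt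
  have hy' : y ∈ uIcc s t := Ioo_subset_Icc_self hy
  have hmem_a := h.mk_mem_segment hA (ordConnected_Icc.uIcc_subset hs.1 ht.1 hy')
  have hmem_b := h.mk_mem_segment hB (ordConnected_Icc.uIcc_subset hs.2 ht.2 hy')
  rw [show (segmentStrands pos).pos b y = (segmentStrands pos).pos a y from heq.symm] at hmem_b
  obtain ⟨w, ⟨hw, -⟩, hwy⟩ := h.inter_subset hA hB hne ⟨hmem_a, hmem_b⟩
  have hlower : (pos a.1).2 < y := (le_inf hs.1.1 ht.1.1).trans_lt hy.1
  have hupper : y < (pos a.2).2 := hy.2.trans_le (sup_le hs.1.2 ht.1.2)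
  obtain rfl | rfl := hw
  · exact hlower.ne (congrArg Prod.snd hwy)
  · exact hupper.ne' (congrArg Prod.snd hwy)

theorem exists_columns [Finite V] (h : IsUpwardEmbedding A pos) :
    ∃ (ρ : V × V → ℕ) (l r : V → ℕ), Function.Injective ρ ∧
      (∀ o ∈ drawnStrands A, ∀ v, v = o.1 ∨ v = o.2 → ρ o ∈ Icc (l v) (r v)) ∧
      (∀ u v, (pos u).2 = (pos v).2 → (pos u).1 < (pos v).1 → r u < l v) ∧
      ∀ o ∈ drawnStrands A, ∀ v, (pos v).2 ∈ (segmentStrands pos).range o →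
        (segmentStrands pos).pos o (pos v).2 ≠ (pos v).1 → ρ o ∉ Icc (l v) (r v) := by
  obtain ⟨ρ, ρ_injective, hρ⟩ := h.noncrossingOn.exists_rank
  let I : V → Set (V × V) := fun v => {o | o ∈ drawnStrands A ∧ (v = o.1 ∨ v = o.2)}
  have I_nonempty : ∀ v, (I v).Nonempty := fun v => ⟨(v, v), Or.inr rfl, Or.inl rfl⟩
  choose a ha ha_min using fun v => exists_min_image (I v) ρ (toFinite _) (I_nonempty v)
  choose b hb hb_max using fun v => exists_max_image (I v) ρ (toFinite _) (I_nonempty v)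
  have hat : ∀ v o, o ∈ I v → (pos v).2 ∈ (segmentStrands pos).range o ∧
      (segmentStrands pos).pos o (pos v).2 = (pos v).1 := fun v o ho =>
    h.mem_range_of_incident ho.1 ho.2
  refine ⟨ρ, fun v => ρ (a v), fun v => ρ (b v), ρ_injective,
    fun o ho v hv => ⟨ha_min v o ⟨ho, hv⟩, hb_max v o ⟨ho, hv⟩⟩, fun u v hy hlt => ?_,
    fun o ho v hy hne hmem => ?_⟩
  · obtain ⟨hu, hu'⟩ := hat u (b u) (hb u)
    obtain ⟨hv, hv'⟩ := hat v (a v) (ha v)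
    rw [hy] at hu hu'
    exact hρ _ (hb u).1 _ (ha v).1 ⟨_, ⟨hu, hv⟩, by rwa [hu', hv']⟩
  · obtain hlt | hgt := lt_or_gt_of_ne hne
    · obtain ⟨hv, hv'⟩ := hat v (a v) (ha v)
      exact (hρ o ho _ (ha v).1 ⟨_, ⟨hy, hv⟩, by rwa [hv']⟩).not_ge hmem.1
    · obtain ⟨hv, hv'⟩ := hat v (b v) (hb v)
      exact (hρ _ (hb v).1 o ho ⟨_, ⟨hv, hy⟩, by rwa [hv']⟩).not_ge hmem.2

end IsUpwardEmbedding

end Columns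

/-- The combinatorial data of a visibility representation with flat boxes and vertical edges: the
bar of `v` occupies the columns from `left v` to `right v` at height `height v`, and the edge `uv`
is drawn in the column `track u v`. -/
structure BarLayout {V : Type*} (G : SimpleGraph V) where
  left : V → ℕ
  right : V → ℕ
  height : V → ℝ
  track : V → V → ℕ
  left_le_right : ∀ v, left v ≤ right v
  track_comm : ∀ u v, track v u = track u v
  height_ne : ∀ {u v}, G.Adj u v → height u ≠ height v
  track_mem : ∀ {u v}, G.Adj u v → track u v ∈ Icc (left u) (right u)
  disjoint : ∀ {u v}, u ≠ v → height u = height v →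
    Disjoint (Icc (left u) (right u)) (Icc (left v) (right v))
  track_notMem : ∀ {u v w}, G.Adj u v → w ≠ u → w ≠ v → height w ∈ uIcc (height u) (height v) →
    track u v ∉ Icc (left w) (right w)
  track_injective : ∀ {u v x y}, G.Adj u v → G.Adj x y → track u v = track x y → s(u, v) = s(x, y)

namespace BarLayout

variable {V : Type*} {G : SimpleGraph V} (L : BarLayout G) {u v w : V} {P : Pt}

/-- The visibility representation with the given layout. -/
def toOrthDrawing : OrthDrawing G where
  box v := ⟨L.left v, L.right v, L.height v, L.height v, Nat.cast_le.2 (L.left_le_right v), le_rfl⟩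
  chain u v := [(L.track u v, L.height u), (L.track u v, L.height v)]
  chain_symm u v := by simp [L.track_comm u v]

theorem mem_toOrthDrawing_box : P ∈ (L.toOrthDrawing.box v).pts ↔
    P.1 ∈ Icc (L.left v : ℝ) (L.right v) ∧ P.2 = L.height v := by
  rw [Box.pts, mem_prod, toOrthDrawing, Icc_self, mem_singleton_iff]

theorem mk_mem_toOrthDrawing_box {k : ℕ} (hk : k ∈ Icc (L.left v) (L.right v)) :
    ((k : ℝ), L.height v) ∈ (L.toOrthDrawing.box v).pts :=
  (L.mem_toOrthDrawing_box).2 ⟨⟨Nat.cast_le.2 hk.1, Nat.cast_le.2 hk.2⟩, rfl⟩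

theorem mem_toOrthDrawing_curve : P ∈ L.toOrthDrawing.curve u v ↔
    P.1 = L.track u v ∧ P.2 ∈ uIcc (L.height u) (L.height v) := by
  rw [OrthDrawing.curve, toOrthDrawing, chainSet_pair, mem_vertical_segment]

theorem disjoint_box (h : u ≠ v) :
    Disjoint (L.toOrthDrawing.box u).pts (L.toOrthDrawing.box v).pts := by
  refine disjoint_left.2 fun P hu hv => ?_
  rw [mem_toOrthDrawing_box] at hu hv
  have hleft : max (L.left u) (L.left v) ≤ min (L.right u) (L.right v) := by
    have := (max_le hu.1.1 hv.1.1).trans (le_min hu.1.2 hv.1.2)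
    exact_mod_cast this
  exact disjoint_left.1 (L.disjoint h (hu.2.symm.trans hv.2))
    ⟨le_max_left _ _, hleft.trans (min_le_left _ _)⟩
    ⟨le_max_right _ _, hleft.trans (min_le_right _ _)⟩

theorem curve_inter_box_subset (h : G.Adj u v) :
    L.toOrthDrawing.curve u v ∩ (L.toOrthDrawing.box w).pts ⊆
      {P | (w = u ∧ (L.toOrthDrawing.chain u v).head? = some P) ∨
        (w = v ∧ (L.toOrthDrawing.chain u v).getLast? = some P)} := by
  rintro P ⟨hcurve, hbox⟩
  rw [mem_toOrthDrawing_curve] at hcurve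
  rw [mem_toOrthDrawing_box] at hbox
  obtain rfl | hwu := eq_or_ne w u
  · exact Or.inl ⟨rfl, congrArg some (Prod.ext hcurve.1.symm hbox.2.symm)⟩
  obtain rfl | hwv := eq_or_ne w v
  · exact Or.inr ⟨rfl, congrArg some (Prod.ext hcurve.1.symm hbox.2.symm)⟩
  rw [hcurve.1] at hbox
  exact absurd ⟨Nat.cast_le.1 hbox.1.1, Nat.cast_le.1 hbox.1.2⟩
    (L.track_notMem h hwu hwv (hbox.2 ▸ hcurve.2))

theorem isPlanar_toOrthDrawing : L.toOrthDrawing.IsPlanar := by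
  refine ⟨fun u v => L.disjoint_box, fun u v h => ⟨isSimpleChain_pair ?_, ?_,
    genuineBends_pair _ _⟩, fun u v h => ⟨_, _, [], rfl, L.mk_mem_toOrthDrawing_box (L.track_mem h),
    L.mk_mem_toOrthDrawing_box (L.track_comm u v ▸ L.track_mem h.symm)⟩,
    fun u v w => L.curve_inter_box_subset, ?_⟩
  · exact fun e => L.height_ne h (congrArg Prod.snd e)
  · simp [IsOrthoChain, chainSegs, toOrthDrawing]
  · rintro u v x y huv hxy hne P ⟨hP, hP'⟩
    rw [mem_toOrthDrawing_curve] at hP hP'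
    exact absurd (L.track_injective huv hxy (Nat.cast_injective (hP.1.symm.trans hP'.1))) hne

theorem exists_toOrthDrawing_chain_eq (h : G.Adj u v) (hlt : L.height u < L.height v) :
    ∃ p q : Pt, L.toOrthDrawing.chain u v = [p, q] ∧ p.1 = q.1 ∧ p.2 < q.2 ∧
      p ∈ (L.toOrthDrawing.box u).pts ∧ q ∈ (L.toOrthDrawing.box v).pts :=
  ⟨_, _, rfl, rfl, hlt, L.mk_mem_toOrthDrawing_box (L.track_mem h),
    L.mk_mem_toOrthDrawing_box (L.track_comm u v ▸ L.track_mem h.symm)⟩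

theorem intCoords_toOrthDrawing (h : ∀ v, ∃ n : ℤ, L.height v = n) :
    L.toOrthDrawing.IntCoords := by
  have hint : ∀ (k : ℕ) v, IsIntPt (k, L.height v) := fun k v => ⟨⟨k, by simp⟩, h v⟩
  rintro P (hP | hP)
  · obtain ⟨v, rfl | rfl | rfl | rfl⟩ := mem_iUnion.1 hP <;> exact hint _ v
  · simp only [mem_iUnion] at hP
    obtain ⟨u, v, -, hP⟩ := hP
    obtain rfl | hP := List.mem_cons.1 hP
    · exact hint _ u
    · obtain rfl := List.mem_singleton.1 hP
      exact hint _ v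

end BarLayout

section ToDrawing

variable {V : Type*} {A : V → V → Prop} {G : SimpleGraph V} {pos : V → Pt}

theorem exists_symmetric_extension {α : Type*} [Nonempty α] (hA : ∀ u v, A u v → ¬A v u)
    (f : V → V → α) :
    ∃ g : V → V → α, (∀ u v, g v u = g u v) ∧ ∀ u v, A u v → g u v = f u v := by
  classical
  obtain ⟨c⟩ := ‹Nonempty α›
  refine ⟨fun u v => if A u v then f u v else if A v u then f v u else c, fun u v => ?_,
    fun u v huv => if_pos huv⟩
  by_cases huv : A u v
  · simp only [if_pos huv, if_neg (hA u v huv)]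
  · simp only [if_neg huv]

theorem IsUpwardEmbedding.exists_barLayout [Finite V] (h : IsUpwardEmbedding A pos)
    (hAG : ∀ u v, G.Adj u v → A u v ∨ A v u) :
    ∃ L : BarLayout G, ∀ v, L.height v = (pos v).2 := by
  obtain ⟨ρ, l, r, ρ_injective, hmem, hsep, hnotMem⟩ := h.exists_columns
  obtain ⟨k, k_comm, k_eq⟩ := exists_symmetric_extension (A := A)
    (fun u v huv hvu => lt_asymm (h.lt_snd huv) (h.lt_snd hvu)) fun u v => ρ (u, v)
  have k_notMem : ∀ {u v w}, A u v → w ≠ u → w ≠ v → (pos w).2 ∈ uIcc (pos u).2 (pos v).2 →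
      k u v ∉ Icc (l w) (r w) := fun {u v w} huv hwu hwv hw => by
    rw [uIcc_of_le (h.lt_snd huv).le] at hw
    exact k_eq _ _ huv ▸ hnotMem (u, v) (Or.inl huv) w hw fun e => h.notMem_segment huv hwu hwv
      ((mem_segment_iff_lineX (h.lt_snd huv)).2 ⟨hw, e.symm⟩)
  have hedge : ∀ {u v}, G.Adj u v → ∃ a b, A a b ∧ s(u, v) = s(a, b) ∧ k u v = ρ (a, b) :=
    fun {u v} huv => (hAG u v huv).elim (fun huv => ⟨u, v, huv, rfl, k_eq _ _ huv⟩)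
      fun hvu => ⟨v, u, hvu, Sym2.eq_swap, (k_comm v u).trans (k_eq _ _ hvu)⟩
  refine ⟨⟨l, r, fun v => (pos v).2, k, fun v => ?_, k_comm, fun huv => ?_, fun huv => ?_,
    fun {u v} huv hy => ?_, fun {u v w} huv hwu hwv hw => ?_, fun huv hxy hk => ?_⟩, fun v => rfl⟩
  · have hv := hmem (v, v) (Or.inr rfl) v (Or.inl rfl)
    exact hv.1.trans hv.2
  · exact (hAG _ _ huv).elim (fun huv => (h.lt_snd huv).ne) fun hvu => (h.lt_snd hvu).ne'
  · obtain ⟨a, b, hab, hs, hk⟩ := hedge huv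
    rw [hk]
    exact hmem (a, b) (Or.inl hab) _ (Sym2.mem_iff.1 (hs ▸ Sym2.mem_mk_left _ _))
  · refine disjoint_left.2 fun c hu hv => ?_
    obtain hlt | hgt := lt_or_gt_of_ne fun e => huv (h.injective (Prod.ext e hy))
    · exact (hsep u v hy hlt).not_ge (hv.1.trans hu.2)
    · exact (hsep v u hy.symm hgt).not_ge (hu.1.trans hv.2)
  · obtain huv | hvu := hAG u v huv
    · exact k_notMem huv hwu hwv hw
    · exact k_comm v u ▸ k_notMem hvu hwv hwu (uIcc_comm (pos u).2 _ ▸ hw)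
  · obtain ⟨a, b, -, hs, hk₁⟩ := hedge huv
    obtain ⟨c, d, -, hs', hk₂⟩ := hedge hxy
    rw [hs, hs', Sym2.mk, ρ_injective (hk₁.symm.trans (hk.trans hk₂))]

end ToDrawing

theorem upward_planar_iff_vertical_VR_general {V : Type*} [Finite V]
    (A : V → V → Prop) (G : SimpleGraph V)
    (hAG : ∀ u v, G.Adj u v ↔ (A u v ∨ A v u)) :
    (∃ D : PolylineDrawing G, D.IsStraightLine ∧ D.IsPlanar ∧ D.IntCoords ∧
      ∀ u v, A u v → (D.pos u).2 < (D.pos v).2) ↔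
    (∃ D : OrthDrawing G, D.IsPlanar ∧ D.IsVR ∧ D.IntCoords ∧
      ∀ u v, A u v → ∃ p q : Pt, D.chain u v = [p, q] ∧ p.1 = q.1 ∧ p.2 < q.2 ∧
        p ∈ (D.box u).pts ∧ q ∈ (D.box v).pts) := by
  have hadj : ∀ u v, A u v → G.Adj u v := fun u v huv => (hAG u v).2 (Or.inl huv)
  rw [exists_upward_drawing_iff hAG]
  constructor
  · rintro ⟨pos, hpos, hint⟩
    obtain ⟨L, hL⟩ := hpos.exists_barLayout fun u v => (hAG u v).1
    exact ⟨L.toOrthDrawing, L.isPlanar_toOrthDrawing, fun _ _ _ => rfl,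
      L.intCoords_toOrthDrawing fun v => hL v ▸ (hint v).2, fun u v huv =>
        L.exists_toOrthDrawing_chain_eq (hadj u v huv) (by simpa only [hL] using hpos.lt_snd huv)⟩
  · rintro ⟨D, hD, -, -, hA⟩
    obtain ⟨B, hB, hheight⟩ := exists_barSystem_of_isPlanar hadj hD hA
    obtain ⟨x, hx⟩ := B.exists_isUpwardEmbedding
    exact ⟨fun v => (x v, B.height v), hx.comap Function.injective_id fun huv => hB _ _ huv,
      fun v => ⟨⟨x v, rfl⟩, hheight v⟩⟩

/-- Let `A` be a finite directed acyclic graph whose underlying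
undirected graph `G` is simple and planar. Then `A` has an upward planar drawing
(a planar straight-line drawing of `G` in which the head of every directed edge is
strictly above its tail) if and only if `G` has a visibility representation in which
every edge is drawn as a vertical segment whose lower endpoint lies on the box of
the tail and whose upper endpoint lies on the box of the head. -/
theorem upward_planar_iff_vertical_VR {V : Type} [Fintype V]
    (A : V → V → Prop) (G : SimpleGraph V)
    (hAG : ∀ u v, G.Adj u v ↔ (A u v ∨ A v u))
    (hacyclic : ∀ v, ¬ Relation.TransGen A v v)
    (hplanar : HasPlanarEmbedding G) :
    (∃ D : PolylineDrawing G, D.IsStraightLine ∧ D.IsPlanar ∧ D.IntCoords ∧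
      ∀ u v, A u v → (D.pos u).2 < (D.pos v).2) ↔
    (∃ D : OrthDrawing G, D.IsPlanar ∧ D.IsVR ∧ D.IntCoords ∧
      ∀ u v, A u v → ∃ p q : Pt, D.chain u v = [p, q] ∧ p.1 = q.1 ∧ p.2 < q.2 ∧
        p ∈ (D.box u).pts ∧ q ∈ (D.box v).pts) := by
  exact upward_planar_iff_vertical_VR_general A G hAG
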